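/- Let k1 ≥ k2 ≥ 2 be integers and let G be a connected simple graph on n ≥ 2k1 + 2k2 + 2 vertices that contains no subgraph isomorphic to P_{2k1+1} ∪ P_{2k2+1}. Then e(G) ≤ max{ h(n, 2k1 + 2k2 + 1, 1), h(n, 2k1 + 2k2, k1 + k2 − 1) }. -/

import Mathlib

open SimpleGraph

/-- The number of edges of a simple graph. -/
noncomputable def edgeCount {V : Type*} (G : SimpleGraph V) : ℕ := G.edgeSet.ncard

/-- `H` occurs as a subgraph of `G` (there is an injective map preserving adjacency). -/
def ContainsCopy {V W : Type*} (G : SimpleGraph V) (H : SimpleGraph W) : Prop :=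
  ∃ f : W → V, Function.Injective f ∧ ∀ a b : W, H.Adj a b → G.Adj (f a) (f b)

/-- The Turán number `ex(n, H)`: the maximum number of edges of an `H`-free
simple graph on `n` vertices. -/
noncomputable def exNum (n : ℕ) {W : Type*} (H : SimpleGraph W) : ℕ :=
  sSup {m | ∃ G : SimpleGraph (Fin n), ¬ ContainsCopy G H ∧ edgeCount G = m}

/-- `h(n,k,a) = C(k-a,2) + a(n-k+a)`. -/
def hFun (n k a : ℕ) : ℕ := (k - a).choose 2 + a * (n - k + a)

/-- `c(n,m,ℓ) = C(m-1,2) + t·C(ℓ-1,2) + C(r,2)` where `n = (m-1) + t(ℓ-1) + r`,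
`0 ≤ r < ℓ-1`. -/
def cFun (n m l : ℕ) : ℕ :=
  (m - 1).choose 2 + ((n - (m - 1)) / (l - 1)) * ((l - 1).choose 2)
    + ((n - (m - 1)) % (l - 1)).choose 2

section Paths

variable {V : Type*} {G : SimpleGraph V}

/-- `l` lists the vertices of a path of `G`, in order. -/
def IsPathList (G : SimpleGraph V) (l : List V) : Prop := l.IsChain G.Adj ∧ l.Nodup

/-- The finite set `T` carries a spanning cycle of `G` (or a single edge). -/
def HasCycleOn [DecidableEq V] (G : SimpleGraph V) (T : Finset V) : Prop :=
  ∃ l : List V, IsPathList G l ∧ l ≠ [] ∧ (∀ x ∈ l.getLast?, ∀ y ∈ l.head?, G.Adj x y) ∧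
    l.toFinset = T

theorem IsPathList.reverse {l : List V} (h : IsPathList G l) : IsPathList G l.reverse := by
  refine ⟨?_, List.nodup_reverse.2 h.2⟩
  rw [List.isChain_reverse]
  exact h.1.imp fun _ _ hab => hab.symm

theorem IsPathList.append {l₁ l₂ : List V} (h₁ : IsPathList G l₁) (h₂ : IsPathList G l₂)
    (hd : List.Disjoint l₁ l₂) (hadj : ∀ x ∈ l₁.getLast?, ∀ y ∈ l₂.head?, G.Adj x y) :
    IsPathList G (l₁ ++ l₂) :=
  ⟨List.isChain_append.2 ⟨h₁.1, h₂.1, hadj⟩, h₁.2.append h₂.2 hd⟩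

theorem IsPathList.left_of_append {l₁ l₂ : List V} (h : IsPathList G (l₁ ++ l₂)) :
    IsPathList G l₁ :=
  ⟨(List.isChain_append.1 h.1).1, (List.nodup_append'.1 h.2).1⟩

theorem IsPathList.right_of_append {l₁ l₂ : List V} (h : IsPathList G (l₁ ++ l₂)) :
    IsPathList G l₂ :=
  ⟨(List.isChain_append.1 h.1).2.1, (List.nodup_append'.1 h.2).2.1⟩

theorem IsPathList.disjoint_of_append {l₁ l₂ : List V} (h : IsPathList G (l₁ ++ l₂)) :
    List.Disjoint l₁ l₂ :=
  (List.nodup_append'.1 h.2).2.2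

theorem IsPathList.singleton (v : V) : IsPathList G [v] := ⟨.singleton _, List.nodup_singleton _⟩

theorem IsPathList.cons {v a : V} {l : List V} (h : IsPathList G l) (hv : v ∉ l)
    (ha : a ∈ l.head?) (hadj : G.Adj v a) : IsPathList G (v :: l) := by
  refine IsPathList.append (l₁ := [v]) (.singleton v) h (by simpa using hv) ?_
  intro x hx y hy
  simp only [List.getLast?_singleton, Option.mem_def, Option.some.injEq] at hx ha hy
  rw [ha] at hy
  simp_all

theorem IsPathList.concat {v b : V} {l : List V} (h : IsPathList G l) (hv : v ∉ l)
    (hb : b ∈ l.getLast?) (hadj : G.Adj b v) : IsPathList G (l ++ [v]) := by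
  have := (h.reverse.cons (v := v) (a := b) (by simpa using hv) (by simpa using hb)
    hadj.symm).reverse
  simpa using this

/-- A path whose ends are joined closes to a cycle. -/
theorem IsPathList.hasCycleOn [DecidableEq V] {a b : V} {l : List V} (h : IsPathList G l)
    (ha : a ∈ l.head?) (hb : b ∈ l.getLast?) (hab : G.Adj a b) : HasCycleOn G l.toFinset := by
  refine ⟨l, h, by rintro rfl; simp at ha, ?_, rfl⟩
  intro x hx y hy
  rw [Option.mem_def] at *
  obtain rfl : b = x := by simpa [hb] using hx
  obtain rfl : a = y := by simpa [ha] using hy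
  exact hab.symm

/-- Two crossing chords from the ends of a path give a spanning cycle. -/
theorem IsPathList.hasCycleOn_of_crossing [DecidableEq V] {a b u v : V} {l₁ l₂ : List V}
    (h : IsPathList G (l₁ ++ l₂)) (ha : a ∈ l₁.head?) (hu : u ∈ l₁.getLast?)
    (hv : v ∈ l₂.head?) (hb : b ∈ l₂.getLast?) (hav : G.Adj a v) (hbu : G.Adj b u) :
    HasCycleOn G (l₁ ++ l₂).toFinset := by
  have hp : IsPathList G (l₁.reverse ++ l₂) := by
    refine h.left_of_append.reverse.append h.right_of_append ?_ ?_
    · intro x hx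
      exact h.disjoint_of_append (by simpa using hx)
    · intro x hx y hy
      rw [List.getLast?_reverse] at hx
      rw [Option.mem_def] at *
      obtain rfl : a = x := by simpa [ha] using hx
      obtain rfl : v = y := by simpa [hv] using hy
      exact hav
  have hc := hp.hasCycleOn (a := u) (b := b) ?_ ?_ hbu.symm
  · simpa using hc
  · rw [List.head?_append, List.head?_reverse]
    rw [Option.mem_def] at *
    simp [hu]
  · rw [List.getLast?_append]
    rw [Option.mem_def] at *
    simp [hb]

/-- If no two consecutive entries `u, v` of `l` satisfy `p v` and `q u`, then few entries satisfy
`p` or `q`. -/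
theorem List.countP_tail_add_countP_dropLast_lt (p q : V → Bool) :
    ∀ l : List V, l ≠ [] →
      (∀ l₁ l₂ u v, l = l₁ ++ u :: v :: l₂ → p v = true → q u = true → False) →
      l.tail.countP p + l.dropLast.countP q < l.length
  | [], h, _ => absurd rfl h
  | [a], _, _ => by simp
  | a :: b :: l, _, hno => by
    have ih := countP_tail_add_countP_dropLast_lt p q (b :: l) (by simp) (by
      intro l₁ l₂ u v he hp hq
      exact hno (a :: l₁) l₂ u v (by simp [he]) hp hq)
    have h0 := hno [] l a b rfl
    simp only [List.tail_cons, List.dropLast_cons_cons, List.countP_cons, List.length_cons] at ih ⊢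
    by_cases hp : p b = true <;> by_cases hq : q a = true <;> simp_all <;> omega

end Paths

set_option linter.unusedSectionVars false

section Degrees

variable {V : Type*} [DecidableEq V] {G : SimpleGraph V} [DecidableRel G.Adj]

/-- The number of neighbours of `v` in `W`. -/
def degIn (G : SimpleGraph V) [DecidableRel G.Adj] (W : Finset V) (v : V) : ℕ :=
  (W.filter (G.Adj v)).card

/-- Twice the number of edges of `G` inside `W`. -/
def degSum (G : SimpleGraph V) [DecidableRel G.Adj] (W : Finset V) : ℕ :=
  ∑ v ∈ W, degIn G W v

theorem degIn_mono {A B : Finset V} (h : A ⊆ B) (v : V) : degIn G A v ≤ degIn G B v :=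
  Finset.card_le_card (Finset.filter_subset_filter _ h)

theorem degIn_union {A B : Finset V} (h : Disjoint A B) (v : V) :
    degIn G (A ∪ B) v = degIn G A v + degIn G B v := by
  unfold degIn
  rw [Finset.filter_union, Finset.card_union_of_disjoint (Finset.disjoint_filter_filter h)]

theorem degIn_sdiff_add {X W : Finset V} (h : X ⊆ W) (v : V) :
    degIn G (W \ X) v + degIn G X v = degIn G W v := by
  rw [← degIn_union Finset.sdiff_disjoint, Finset.sdiff_union_of_subset h]

theorem degIn_le_card (W : Finset V) (v : V) : degIn G W v ≤ W.card := Finset.card_filter_le _ _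

theorem degIn_lt_card {W : Finset V} {v : V} (hv : v ∈ W) : degIn G W v < W.card :=
  Finset.card_lt_card (Finset.filter_ssubset.2 ⟨v, hv, by simp⟩)

theorem sum_degIn_comm (A B : Finset V) : ∑ a ∈ A, degIn G B a = ∑ b ∈ B, degIn G A b := by
  unfold degIn
  simp only [Finset.card_filter]
  rw [Finset.sum_comm]
  simp only [G.adj_comm]

theorem degSum_union {A B : Finset V} (h : Disjoint A B) :
    degSum G (A ∪ B) = degSum G A + degSum G B + 2 * ∑ a ∈ A, degIn G B a := by
  unfold degSum
  rw [Finset.sum_union h]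
  simp only [degIn_union h, Finset.sum_add_distrib]
  rw [sum_degIn_comm B A]
  ring

theorem degSum_le (W : Finset V) : degSum G W ≤ W.card * (W.card - 1) := by
  unfold degSum
  rw [← smul_eq_mul]
  exact Finset.sum_le_card_nsmul _ _ _ fun v hv => Nat.le_sub_one_of_lt (degIn_lt_card hv)

theorem degSum_eq_sdiff {X W : Finset V} (h : X ⊆ W) :
    degSum G W = degSum G (W \ X) + degSum G X + 2 * ∑ x ∈ X, degIn G (W \ X) x := by
  have := degSum_union (G := G) (Finset.disjoint_sdiff (s := X) (t := W))
  rw [Finset.union_sdiff_of_subset h] at this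
  omega

theorem degSum_erase {W : Finset V} {v : V} (h : v ∈ W) :
    degSum G W = degSum G (W.erase v) + 2 * degIn G W v := by
  have h1 := degSum_eq_sdiff (G := G) (Finset.singleton_subset_iff.2 h)
  have h2 := degSum_le (G := G) {v}
  have h3 := degIn_sdiff_add (G := G) (Finset.singleton_subset_iff.2 h) v
  have h4 := degIn_lt_card (G := G) (Finset.mem_singleton_self v)
  simp only [Finset.sum_singleton, Finset.card_singleton, Finset.sdiff_singleton_eq_erase] at *
  omega

theorem two_mul_edgeCount [Fintype V] : 2 * edgeCount G = degSum G Finset.univ := by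
  have h : edgeCount G = G.edgeFinset.card := by
    unfold edgeCount
    rw [← coe_edgeFinset, Set.ncard_coe_finset]
  rw [h, ← sum_degrees_eq_twice_card_edges]
  refine Finset.sum_congr rfl fun v _ => ?_
  rw [degIn, ← card_neighborFinset_eq_degree, neighborFinset_eq_filter]

theorem degIn_toFinset {l : List V} (h : l.Nodup) (v : V) :
    degIn G l.toFinset v = l.countP fun w => decide (G.Adj v w) := by
  rw [degIn, List.countP_eq_length_filter, ← List.toFinset_card_of_nodup (h.filter _),
    List.toFinset_filter]
  simp

theorem List.countP_tail_of_head_not {p : V → Bool} {l : List V} {a : V} (ha : a ∈ l.head?)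
    (hp : p a = false) : l.tail.countP p = l.countP p := by
  cases l with
  | nil => simp
  | cons b l => simp_all

theorem List.countP_le_tail (p : V → Bool) (l : List V) : l.countP p ≤ l.tail.countP p + 1 := by
  cases l with
  | nil => simp
  | cons b l =>
    rw [List.countP_cons, List.tail_cons]
    split <;> omega

theorem List.countP_dropLast_of_getLast_not {p : V → Bool} {l : List V} {a : V}
    (ha : a ∈ l.getLast?) (hp : p a = false) : l.dropLast.countP p = l.countP p := by
  have := List.countP_tail_of_head_not (p := p) (l := l.reverse) (a := a) (by simpa using ha) hp
  rw [List.tail_reverse, List.countP_reverse, List.countP_reverse] at this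
  exact this

theorem List.countP_le_dropLast (p : V → Bool) (l : List V) :
    l.countP p ≤ l.dropLast.countP p + 1 := by
  have := List.countP_le_tail p l.reverse
  rw [List.tail_reverse, List.countP_reverse, List.countP_reverse] at this
  exact this

theorem List.exists_head_of_ne_nil {l : List V} (h : l ≠ []) : ∃ a, a ∈ l.head? :=
  ⟨l.head h, by simp [List.head?_eq_some_head h]⟩

/-- A crossing at consecutive inner vertices of a path. -/
theorem IsPathList.hasCycleOn_of_consecutive {a b u v : V} {l l₁ l₂ : List V}
    (h : IsPathList G l) (hl : l = l₁ ++ u :: v :: l₂) (ha : a ∈ l.head?) (hb : b ∈ l.getLast?)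
    (hav : G.Adj a v) (hbu : G.Adj b u) : HasCycleOn G l.toFinset := by
  have hl' : l = (l₁ ++ [u]) ++ (v :: l₂) := by simp [hl]
  subst hl'
  refine h.hasCycleOn_of_crossing (a := a) (b := b) (u := u) (v := v) ?_ (by simp) (by simp) ?_
    hav hbu
  · cases l₁ <;> simpa using ha
  · rw [List.getLast?_append] at hb
    rw [Option.mem_def] at *
    rcases hc : (v :: l₂).getLast? with _ | c
    · simp at hc
    · simpa [hc] using hb

/-- Ore-type closing of a path with ends of large degree. -/
theorem IsPathList.hasCycleOn_of_degIn {a b : V} {l : List V} (h : IsPathList G l)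
    (ha : a ∈ l.head?) (hb : b ∈ l.getLast?)
    (hdeg : l.length ≤ degIn G l.toFinset a + degIn G l.toFinset b) :
    HasCycleOn G l.toFinset := by
  by_contra hno
  have hlt := List.countP_tail_add_countP_dropLast_lt (fun w => decide (G.Adj a w))
    (fun w => decide (G.Adj b w)) l (by rintro rfl; simp at ha) (by
      intro l₁ l₂ u v he hp hq
      exact hno (h.hasCycleOn_of_consecutive he ha hb (by simpa using hp) (by simpa using hq)))
  rw [List.countP_tail_of_head_not ha (by simp), List.countP_dropLast_of_getLast_not hb (by simp),
    ← degIn_toFinset h.2, ← degIn_toFinset h.2] at hlt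
  omega

/-- Inserting a path into a cycle: `l₁ ++ l₂` is the cycle, and the last vertices of `l₁` and `l₂`
are joined to the two ends of `X`. -/
theorem hasCycleOn_insert {l₁ l₂ X : List V} {a b u w x y : V}
    (h₁ : IsPathList G l₁) (h₂ : IsPathList G l₂) (hX : IsPathList G X)
    (h₁₂ : List.Disjoint l₁ l₂) (h₁X : List.Disjoint l₁ X) (h₂X : List.Disjoint l₂ X)
    (ha : a ∈ l₁.head?) (hb : b ∈ l₂.head?) (hu : u ∈ l₁.getLast?) (hw : w ∈ l₂.getLast?)
    (hx : x ∈ X.head?) (hy : y ∈ X.getLast?) (huy : G.Adj u y) (hwx : G.Adj w x)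
    (hab : G.Adj a b ∨ l₁.length + l₂.length <
      degIn G (l₁ ++ l₂).toFinset a + degIn G (l₁ ++ l₂).toFinset b) :
    HasCycleOn G ((l₁ ++ l₂).toFinset ∪ X.toFinset) := by
  have hset : (l₁ ++ (X.reverse ++ l₂.reverse)).toFinset = (l₁ ++ l₂).toFinset ∪ X.toFinset := by
    ext z; simp only [List.mem_toFinset, List.mem_append, List.mem_reverse, Finset.mem_union]
    tauto
  have hXl : IsPathList G (X.reverse ++ l₂.reverse) := by
    refine hX.reverse.append h₂.reverse (fun z hz hz' => ?_) fun z hz z' hz' => ?_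
    · exact h₂X (by simpa using hz') (by simpa using hz)
    · rw [List.getLast?_reverse] at hz
      rw [List.head?_reverse] at hz'
      rw [Option.mem_def] at *
      obtain rfl : x = z := by simpa [hx] using hz
      obtain rfl : w = z' := by simpa [hw] using hz'
      exact hwx.symm
  have hp : IsPathList G (l₁ ++ (X.reverse ++ l₂.reverse)) := by
    refine h₁.append hXl (fun z hz hz' => ?_) fun z hz z' hz' => ?_
    · simp only [List.mem_append, List.mem_reverse] at hz'
      exact hz'.elim (h₁X hz) (h₁₂ hz)
    · rw [List.head?_append, List.head?_reverse] at hz'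
      rw [Option.mem_def] at *
      obtain rfl : u = z := by simpa [hu] using hz
      obtain rfl : y = z' := by simpa [hy] using hz'
      exact huy
  have hha : a ∈ (l₁ ++ (X.reverse ++ l₂.reverse)).head? := by
    rw [List.head?_append]; rw [Option.mem_def] at *; simp [ha]
  have hhb : b ∈ (l₁ ++ (X.reverse ++ l₂.reverse)).getLast? := by
    rw [← List.append_assoc, List.getLast?_append, List.getLast?_reverse]
    rw [Option.mem_def] at *; simp [hb]
  rw [← hset]
  rcases hab with hab | hdeg
  · exact hp.hasCycleOn hha hhb hab
  · by_contra hno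
    have hlt₁ := List.countP_tail_add_countP_dropLast_lt (fun w => decide (G.Adj a w))
      (fun w => decide (G.Adj b w)) l₁ (by rintro rfl; simp at ha) (by
        intro m₁ m₂ u v he hp' hq'
        exact hno (hp.hasCycleOn_of_consecutive (u := u) (v := v) (l₁ := m₁) 
          (l₂ := m₂ ++ (X.reverse ++ l₂.reverse))
          (by simp [he]) hha hhb (by simpa using hp') (by simpa using hq')))
    have hlt₂ := List.countP_tail_add_countP_dropLast_lt (fun w => decide (G.Adj a w))
      (fun w => decide (G.Adj b w)) l₂.reverse
        (by intro h; rw [List.reverse_eq_nil_iff] at h; subst h; simp at hb) (by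
        intro m₁ m₂ u v he hp' hq'
        exact hno (hp.hasCycleOn_of_consecutive (u := u) (v := v)
          (l₁ := l₁ ++ X.reverse ++ m₁) (l₂ := m₂)
          (by simp [he]) hha hhb (by simpa using hp') (by simpa using hq')))
    have e1 := List.countP_tail_of_head_not (p := fun w => decide (G.Adj a w)) ha (by simp)
    have e2 := List.countP_dropLast_of_getLast_not (p := fun w => decide (G.Adj b w))
      (l := l₂.reverse) (a := b) (by simpa using hb) (by simp)
    have e3 := List.countP_le_tail (fun w => decide (G.Adj a w)) l₂.reverse
    have e4 := List.countP_le_dropLast (fun w => decide (G.Adj b w)) l₁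
    rw [degIn_toFinset (h₁.2.append h₂.2 h₁₂), degIn_toFinset (h₁.2.append h₂.2 h₁₂),
      List.countP_append, List.countP_append] at hdeg
    simp only [List.countP_reverse, List.length_reverse] at *
    omega

end Degrees

section Cycles

variable {V : Type*} {G : SimpleGraph V} {N : ℕ}

/-- `f` parametrizes a cycle of length `N` of `G`. -/
def IsCyc (G : SimpleGraph V) {N : ℕ} (f : ZMod N → V) : Prop :=
  Function.Injective f ∧ ∀ i, G.Adj (f i) (f (i + 1))

theorem IsCyc.neg {f : ZMod N → V} (hf : IsCyc G f) : IsCyc G fun i => f (-i) := by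
  refine ⟨fun i j h => neg_injective (hf.1 h), fun i => ?_⟩
  have := (hf.2 (-(i + 1))).symm
  simpa using this

/-- The `m` consecutive vertices of the cycle `f` starting at `i`. -/
def arc (f : ZMod N → V) (i : ZMod N) (m : ℕ) : List V :=
  (List.range m).map fun j => f (i + (j : ℕ))

theorem length_arc (f : ZMod N → V) (i : ZMod N) (m : ℕ) : (arc f i m).length = m := by
  simp [arc]

theorem mem_arc {f : ZMod N → V} {i : ZMod N} {m : ℕ} {v : V} :
    v ∈ arc f i m ↔ ∃ j < m, f (i + (j : ℕ)) = v := by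
  simp [arc]

theorem arc_add (f : ZMod N → V) (i : ZMod N) (m m' : ℕ) :
    arc f i (m + m') = arc f i m ++ arc f (i + m) m' := by
  simp [arc, List.range_add, add_assoc]

theorem head_arc (f : ZMod N → V) (i : ZMod N) {m : ℕ} (hm : 0 < m) :
    f i ∈ (arc f i m).head? := by
  obtain ⟨m, rfl⟩ := Nat.exists_eq_succ_of_ne_zero hm.ne'
  simp [arc, List.range_succ_eq_map]

theorem getLast_arc (f : ZMod N → V) (i j : ZMod N) {m : ℕ} (hm : 0 < m) (hj : i + m = j + 1) :
    f j ∈ (arc f i m).getLast? := by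
  obtain ⟨m, rfl⟩ := Nat.exists_eq_succ_of_ne_zero hm.ne'
  have : j = i + m := by
    push_cast at hj
    linear_combination -hj
  simp [arc, List.range_succ, this]

theorem IsCyc.isPathList_arc {f : ZMod N → V} (hf : IsCyc G f) (i : ZMod N) {m : ℕ} (hm : m ≤ N) :
    IsPathList G (arc f i m) := by
  constructor
  · rw [arc, List.isChain_map, List.isChain_range]
    intro j _
    have := hf.2 (i + j)
    simpa [add_assoc] using this
  · refine List.Nodup.map_on ?_ List.nodup_range
    intro a ha b hb hab
    rw [List.mem_range] at ha hb
    have := add_left_cancel (hf.1 hab)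
    rw [ZMod.natCast_eq_natCast_iff'] at this
    rwa [Nat.mod_eq_of_lt (by omega), Nat.mod_eq_of_lt (by omega)] at this

theorem toFinset_arc [NeZero N] [DecidableEq V] (f : ZMod N → V) (i : ZMod N) :
    (arc f i N).toFinset = Finset.univ.image f := by
  ext v
  simp only [List.mem_toFinset, mem_arc, Finset.mem_image, Finset.mem_univ, true_and]
  constructor
  · rintro ⟨j, -, rfl⟩
    exact ⟨_, rfl⟩
  · rintro ⟨j, rfl⟩
    exact ⟨(j - i).val, ZMod.val_lt _, by simp⟩

theorem IsCyc.card_image [NeZero N] [DecidableEq V] {f : ZMod N → V} (hf : IsCyc G f) :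
    (Finset.univ.image f).card = N := by
  rw [Finset.card_image_of_injective _ hf.1, Finset.card_univ, ZMod.card]

theorem IsCyc.hasCycleOn [NeZero N] [DecidableEq V] {f : ZMod N → V} (hf : IsCyc G f) :
    HasCycleOn G (Finset.univ.image f) := by
  have h0 := Nat.pos_of_ne_zero (NeZero.ne N)
  rw [← toFinset_arc f 0]
  exact (hf.isPathList_arc 0 le_rfl).hasCycleOn (head_arc f 0 h0)
    (getLast_arc f 0 (-1) h0 (by simp)) (by simpa using (hf.2 (-1)).symm)

theorem HasCycleOn.exists_isCyc [NeZero N] [DecidableEq V] {T : Finset V} (h : HasCycleOn G T)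
    (hT : T.card = N) : ∃ f : ZMod N → V, IsCyc G f ∧ Finset.univ.image f = T := by
  obtain ⟨l, hl, hne, hadj, rfl⟩ := h
  rw [List.toFinset_card_of_nodup hl.2] at hT
  have hlt : ∀ i : ZMod N, i.val < l.length := fun i => hT ▸ ZMod.val_lt i
  have hinj : Function.Injective fun i : ZMod N => l[i.val]'(hlt i) := by
    intro i j hij
    exact ZMod.val_injective N ((hl.2.getElem_inj_iff).1 hij)
  refine ⟨fun i => l[i.val]'(hlt i), ⟨hinj, fun i => ?_⟩, ?_⟩
  · by_cases hi : i.val + 1 < N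
    · have hv : (i + 1).val = i.val + 1 := by
        have : Fact (1 < N) := ⟨by omega⟩
        rw [ZMod.val_add_of_lt] <;> rw [ZMod.val_one]
        exact hi
      simp only [hv]
      exact List.isChain_iff_getElem.1 hl.1 _ (by omega)
    · have hi' : i.val + 1 = N := by have := ZMod.val_lt i; omega
      have hv : i + 1 = 0 := by
        rw [← ZMod.natCast_zmod_val i]
        exact_mod_cast (by rw [hi']; simp : ((i.val + 1 : ℕ) : ZMod N) = 0)
      simp only [hv, ZMod.val_zero]
      refine hadj _ ?_ _ ?_
      · rw [List.getLast?_eq_getElem?, Option.mem_def, List.getElem?_eq_some_iff]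
        exact ⟨by omega, by congr 1; omega⟩
      · rw [List.head?_eq_getElem?, Option.mem_def, List.getElem?_eq_some_iff]
        exact ⟨by have := hlt i; omega, rfl⟩
  · refine Finset.eq_of_subset_of_card_le ?_ ?_
    · intro v
      simp only [Finset.mem_image, Finset.mem_univ, true_and, List.mem_toFinset]
      rintro ⟨i, rfl⟩
      exact List.getElem_mem _
    · rw [List.toFinset_card_of_nodup hl.2, Finset.card_image_of_injective _ hinj,
        Finset.card_univ, ZMod.card, hT]

/-- Inserting a path between two vertices of a cycle whose successors are adjacent or have large
degree. -/
theorem IsCyc.hasCycleOn_insert [NeZero N] [DecidableEq V] [DecidableRel G.Adj] {f : ZMod N → V}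
    (hf : IsCyc G f) {i i' : ZMod N} (hii : i ≠ i') {X : List V} (hX : IsPathList G X)
    (hfX : ∀ j, f j ∉ X) {x y : V} (hx : x ∈ X.head?) (hy : y ∈ X.getLast?)
    (hix : G.Adj (f i) x) (hiy : G.Adj (f i') y)
    (hab : G.Adj (f (i + 1)) (f (i' + 1)) ∨
      N < degIn G (Finset.univ.image f) (f (i + 1)) +
        degIn G (Finset.univ.image f) (f (i' + 1))) :
    HasCycleOn G (Finset.univ.image f ∪ X.toFinset) := by
  obtain ⟨m, hm0, hmN, hm⟩ : ∃ m : ℕ, 0 < m ∧ m < N ∧ (m : ZMod N) = i' - i := by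
    refine ⟨(i' - i).val, ?_, ZMod.val_lt _, by simp⟩
    rw [Nat.pos_iff_ne_zero, Ne, ZMod.val_eq_zero, sub_eq_zero]
    exact hii.symm
  have hsplit : arc f (i + 1) N = arc f (i + 1) m ++ arc f (i' + 1) (N - m) := by
    have := arc_add f (i + 1) m (N - m)
    rwa [Nat.add_sub_of_le hmN.le, show i + 1 + (m : ZMod N) = i' + 1 by rw [hm]; ring] at this
  have hp := hf.isPathList_arc (i + 1) le_rfl
  have hnot : ∀ c r, List.Disjoint (arc f c r) X := by
    intro c r v hv hv'
    obtain ⟨j, -, rfl⟩ := mem_arc.1 hv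
    exact hfX _ hv'
  rw [← toFinset_arc f (i + 1), hsplit] at hab ⊢
  rw [hsplit] at hp
  refine _root_.hasCycleOn_insert hp.left_of_append hp.right_of_append hX hp.disjoint_of_append
    (hnot _ _) (hnot _ _) (head_arc f _ hm0) (head_arc f _ (by omega))
    (getLast_arc f _ i' hm0 (by rw [hm]; ring))
    (getLast_arc f _ i (by omega) (by rw [Nat.cast_sub hmN.le, hm, ZMod.natCast_self]; ring)) hx hy hiy hix
    (hab.imp id fun h => ?_)
  rw [length_arc, length_arc]
  omega

theorem image_neg [NeZero N] [DecidableEq V] (f : ZMod N → V) :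
    (Finset.univ.image fun i => f (-i)) = Finset.univ.image f := by
  ext v
  simp only [Finset.mem_image, Finset.mem_univ, true_and]
  exact ⟨fun ⟨i, hi⟩ => ⟨-i, hi⟩, fun ⟨i, hi⟩ => ⟨-i, by simpa using hi⟩⟩

theorem IsCyc.hasCycleOn_insert_pred [NeZero N] [DecidableEq V] [DecidableRel G.Adj]
    {f : ZMod N → V}
    (hf : IsCyc G f) {i i' : ZMod N} (hii : i ≠ i') {X : List V} (hX : IsPathList G X)
    (hfX : ∀ j, f j ∉ X) {x y : V} (hx : x ∈ X.head?) (hy : y ∈ X.getLast?)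
    (hix : G.Adj (f i) x) (hiy : G.Adj (f i') y)
    (hab : G.Adj (f (i - 1)) (f (i' - 1)) ∨
      N < degIn G (Finset.univ.image f) (f (i - 1)) +
        degIn G (Finset.univ.image f) (f (i' - 1))) :
    HasCycleOn G (Finset.univ.image f ∪ X.toFinset) := by
  have h := hf.neg.hasCycleOn_insert (i := -i) (i' := -i') (by simpa using hii) hX
    (fun j => hfX _) hx hy (by simpa using hix) (by simpa using hiy)
    (by simpa [image_neg, neg_add_eq_sub, neg_add, sub_eq_add_neg] using hab)
  rwa [image_neg] at h

end Cycles

section Copies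

variable {V : Type*} {G : SimpleGraph V}

theorem containsCopy_of_isPathList {m₁ m₂ : ℕ} {l₁ l₂ : List V} (h₁ : IsPathList G l₁)
    (h₂ : IsPathList G l₂) (hd : List.Disjoint l₁ l₂) (hl₁ : l₁.length = m₁)
    (hl₂ : l₂.length = m₂) : ContainsCopy G (pathGraph m₁ ⊕g pathGraph m₂) := by
  subst hl₁ hl₂
  have key : ∀ l : List V, IsPathList G l → ∀ a b : Fin l.length,
      (pathGraph l.length).Adj a b → G.Adj (l.get a) (l.get b) := by
    intro l hl a b hab
    have hc := List.isChain_iff_getElem.1 hl.1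
    rw [pathGraph_adj] at hab
    rcases hab with hab | hab
    · have := hc a.1 (by omega)
      simpa [hab] using this
    · have := (hc b.1 (by omega)).symm
      simpa [hab] using this
  refine ⟨Sum.elim l₁.get l₂.get, ?_, ?_⟩
  · refine Function.Injective.sumElim (List.nodup_iff_injective_get.1 h₁.2)
      (List.nodup_iff_injective_get.1 h₂.2) fun a b hab => ?_
    exact hd (List.get_mem l₁ a) (hab ▸ List.get_mem l₂ b)
  · rintro (a | a) (b | b) hab
    · exact key l₁ h₁ a b (by simpa using hab)
    · simp at hab
    · simp at hab
    · exact key l₂ h₂ a b (by simpa using hab)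

theorem containsCopy_of_long_path {m₁ m₂ : ℕ} {l : List V} (h : IsPathList G l)
    (hl : m₁ + m₂ ≤ l.length) : ContainsCopy G (pathGraph m₁ ⊕g pathGraph m₂) := by
  have h1 : IsPathList G (l.take m₁ ++ l.drop m₁) := by rwa [List.take_append_drop]
  have h2 := h1.right_of_append
  rw [← List.take_append_drop m₂ (l.drop m₁)] at h2
  refine containsCopy_of_isPathList h1.left_of_append h2.left_of_append ?_ (by simp; omega)
    (by simp; omega)
  intro v hv hv'
  exact h1.disjoint_of_append hv (List.mem_of_mem_take hv')

end Copies

section DenseSet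

variable {V : Type*} [DecidableEq V] {G : SimpleGraph V} [DecidableRel G.Adj]

theorem exists_longest_list {P : List V → Prop} (B : ℕ) (h : ∃ l, P l)
    (hB : ∀ l, P l → l.length ≤ B) : ∃ l, P l ∧ ∀ l', P l' → l'.length ≤ l.length := by
  obtain ⟨l₀, hl₀⟩ := h
  by_contra! hno
  have key : ∀ m, ∃ l, P l ∧ m ≤ l.length := by
    intro m
    induction m with
    | zero => exact ⟨l₀, hl₀, Nat.zero_le _⟩
    | succ m ih =>
      obtain ⟨l, hl, hm⟩ := ih
      obtain ⟨l', hl', hlt⟩ := hno l hl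
      exact ⟨l', hl', by omega⟩
  obtain ⟨l, hl, hlt⟩ := key (B + 1)
  have := hB l hl
  omega

/-- A set of at least `m` vertices maximizing `degSum - c * card`, of least size. -/
theorem exists_dense_set [Fintype V] (G : SimpleGraph V) [DecidableRel G.Adj] (c m : ℕ)
    (hm : m ≤ Fintype.card V) : ∃ S : Finset V, m ≤ S.card ∧
      (∀ W : Finset V, m ≤ W.card → degSum G W + c * S.card ≤ degSum G S + c * W.card) ∧
      (∀ X ⊆ S, X.Nonempty → m ≤ (S \ X).card →
        degSum G (S \ X) + c * X.card < degSum G S) := by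
  let φ : Finset V → ℤ := fun W =>
    ((degSum G W : ℤ) - c * W.card) * (Fintype.card V + 1) - W.card
  obtain ⟨S, hS, hmax⟩ := Finset.exists_max_image
    ((Finset.univ : Finset (Finset V)).filter fun W => m ≤ W.card) φ
    ⟨Finset.univ, by simpa using hm⟩
  simp only [Finset.mem_filter, Finset.mem_univ, true_and] at hS hmax
  refine ⟨S, hS, fun W hW => ?_, fun X hXS hX hc => ?_⟩
  · have h := hmax W hW
    have hWn : (W.card : ℤ) ≤ Fintype.card V := by exact_mod_cast Finset.card_le_univ W
    simp only [φ] at h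
    have : (degSum G W : ℤ) + c * S.card ≤ degSum G S + c * W.card := by
      by_contra! hlt
      have h1 : (1 : ℤ) ≤ (degSum G W - c * W.card) - (degSum G S - c * S.card) := by linarith
      nlinarith
    exact_mod_cast this
  · have h := hmax (S \ X) hc
    have hcard : (S \ X).card + X.card = S.card := Finset.card_sdiff_add_card_eq_card hXS
    have hX0 : 0 < X.card := hX.card_pos
    simp only [φ] at h
    have hcz : ((S \ X).card : ℤ) = S.card - X.card := by
      rw [← hcard]; push_cast; ring
    rw [hcz] at h
    have : (degSum G (S \ X) : ℤ) + c * X.card < degSum G S := by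
      by_contra! hlt
      have h1 : (0 : ℤ) ≤ (degSum G (S \ X) - c * (S.card - X.card)) -
        (degSum G S - c * S.card) := by linarith
      have h2 : (0 : ℤ) < X.card := by exact_mod_cast hX0
      nlinarith
    exact_mod_cast this

theorem HasCycleOn.exists_path_insert {T : Finset V} (h : HasCycleOn G T) {v w : V} (hv : v ∈ T)
    (hw : w ∉ T) (hvw : G.Adj v w) : ∃ l, IsPathList G (w :: l) ∧ l.toFinset = T ∧
      l.length = T.card := by
  have : NeZero T.card := ⟨(Finset.card_pos.2 ⟨v, hv⟩).ne'⟩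
  obtain ⟨f, hf, hfT⟩ := h.exists_isCyc rfl
  rw [← hfT] at hv hw
  obtain ⟨i, -, rfl⟩ := Finset.mem_image.1 hv
  have hs := toFinset_arc f i
  refine ⟨arc f i T.card, (hf.isPathList_arc i le_rfl).cons ?_
    (head_arc f i (Nat.pos_of_ne_zero (NeZero.ne _))) hvw.symm, hs.trans hfT, length_arc _ _ _⟩
  rwa [← List.mem_toFinset, hs]

theorem List.split_at_consecutive {l : List V} {k : ℕ} (hk : k + 1 < l.length) :
    l = l.take k ++ l[k] :: l[k + 1] :: l.drop (k + 2) := by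
  rw [← List.drop_eq_getElem_cons, ← List.drop_eq_getElem_cons, List.take_append_drop]

theorem List.head_mem_zero {l : List V} (h : 0 < l.length) : l[0] ∈ l.head? := by
  rw [List.head?_eq_getElem?, Option.mem_def, List.getElem?_eq_some_iff]
  exact ⟨h, rfl⟩

theorem List.getLast_mem_last {l : List V} {m : ℕ} (h : m + 1 = l.length) :
    l[m] ∈ l.getLast? := by
  rw [List.getLast?_eq_getElem?, Option.mem_def, List.getElem?_eq_some_iff]
  exact ⟨by omega, by congr 1; omega⟩

/-- Skipping one vertex of a path by two chords from its ends. -/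
theorem IsPathList.hasCycleOn_of_skip {a b u v w : V} {l l₁ l₂ : List V}
    (h : IsPathList G l) (hl : l = l₁ ++ u :: w :: v :: l₂) (ha : a ∈ l.head?)
    (hb : b ∈ l.getLast?) (hav : G.Adj a v) (hbu : G.Adj b u) :
    HasCycleOn G (l₁ ++ u :: v :: l₂).toFinset := by
  have hsub : (l₁ ++ u :: v :: l₂).Sublist l := by
    rw [hl]
    exact (List.Sublist.refl _).append (by simp)
  have hp₁ : IsPathList G (l₁ ++ [u]) := by
    have : IsPathList G ((l₁ ++ [u]) ++ w :: v :: l₂) := by simpa [← hl] using h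
    exact this.left_of_append
  have hp₂ : IsPathList G (v :: l₂) := by
    have : IsPathList G ((l₁ ++ [u, w]) ++ v :: l₂) := by simpa [← hl] using h
    exact this.right_of_append
  have hnd : List.Disjoint (l₁ ++ [u]) (v :: l₂) := by
    have := hsub.nodup h.2
    rw [show l₁ ++ u :: v :: l₂ = (l₁ ++ [u]) ++ v :: l₂ by simp] at this
    exact (List.nodup_append'.1 this).2.2
  have hb' : b ∈ (v :: l₂).getLast? := by
    rw [hl] at hb
    simpa using hb
  have ha' : a ∈ (l₁ ++ [u]).head? := by
    rw [hl] at ha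
    cases l₁ <;> simpa using ha
  have hp : IsPathList G ((l₁ ++ [u]) ++ (v :: l₂).reverse) := by
    refine hp₁.append hp₂.reverse (fun z hz hz' => hnd hz (List.mem_reverse.1 hz')) ?_
    intro x hx y hy
    rw [List.head?_reverse] at hy
    rw [Option.mem_def] at *
    obtain rfl : b = y := by simpa [hb'] using hy
    obtain rfl : u = x := by simpa using hx
    exact hbu.symm
  have := hp.hasCycleOn (a := a) (b := v) (by
    rw [List.head?_append]; rw [Option.mem_def] at *; simp [ha'])
    (by rw [List.getLast?_append]; simp) hav
  convert this using 1
  ext z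
  simp

theorem degIn_image {q : ℕ → V} {m : ℕ} (hq : Set.InjOn q (Finset.range m)) (v : V) :
    degIn G ((Finset.range m).image q) v = ((Finset.range m).filter fun k => G.Adj v (q k)).card := by
  rw [degIn, Finset.filter_image, Finset.card_image_of_injOn]
  exact hq.mono fun x hx => by simp at hx ⊢; exact hx.1

end DenseSet

section Hamiltonian

variable {V : Type*} [DecidableEq V] {G : SimpleGraph V} [DecidableRel G.Adj]

/-- All neighbours in `S` of the first vertex of a longest path of `S` lie on the path. -/
theorem adj_mem_of_longest {S : Finset V} {l : List V} (hl : IsPathList G l)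
    (hlS : ∀ v ∈ l, v ∈ S)
    (hmax : ∀ l', IsPathList G l' → (∀ v ∈ l', v ∈ S) → l'.length ≤ l.length)
    {a w : V} (ha : a ∈ l.head?) (hw : w ∈ S) (haw : G.Adj a w) : w ∈ l := by
  by_contra hwl
  have := hmax (w :: l) (hl.cons hwl ha haw.symm) (by
    intro v hv
    rcases List.mem_cons.1 hv with rfl | hv
    · exact hw
    · exact hlS v hv)
  simp at this

theorem degIn_eq_of_longest {S : Finset V} {l : List V} (hl : IsPathList G l)
    (hlS : ∀ v ∈ l, v ∈ S)
    (hmax : ∀ l', IsPathList G l' → (∀ v ∈ l', v ∈ S) → l'.length ≤ l.length)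
    {a : V} (ha : a ∈ l.head?) : degIn G l.toFinset a = degIn G S a := by
  refine le_antisymm (degIn_mono (fun v hv => hlS v (List.mem_toFinset.1 hv)) a) ?_
  refine Finset.card_le_card fun w hw => ?_
  rw [Finset.mem_filter] at hw ⊢
  exact ⟨List.mem_toFinset.2 (adj_mem_of_longest hl hlS hmax ha hw.1 hw.2), hw.2⟩

/-- A longest path on `2 * K + 1` vertices of `S` whose closure creates no long cycle starts with
`K` vertices having only one neighbour outside. -/
theorem exists_sparse_of_longest {K : ℕ} {S : Finset V} {l : List V}
    (hl : IsPathList G l) (hlS : ∀ v ∈ l, v ∈ S)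
    (hmax : ∀ l', IsPathList G l' → (∀ v ∈ l', v ∈ S) → l'.length ≤ l.length)
    (hlen : l.length = 2 * K + 1) (hK : 0 < K)
    (hC : ∀ T, HasCycleOn G T → T.card < 2 * K) (hdeg : ∀ v ∈ S, K ≤ degIn G S v) :
    ∃ X ⊆ S, X.card = K ∧ K + 1 ≤ (S \ X).card ∧ ∀ x ∈ X, degIn G (S \ X) x ≤ 1 := by
  have hcard : l.toFinset.card = 2 * K + 1 := by rw [List.toFinset_card_of_nodup hl.2, hlen]
  obtain ⟨q, hq⟩ : ∃ q : ℕ → V, ∀ k (h : k < l.length), l[k] = q k := by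
    refine ⟨fun k => if h : k < l.length then l[k] else l[0], fun k h => ?_⟩
    simp [h]
  have hinj : Set.InjOn q (Finset.range (2 * K + 1)) := by
    intro i hi j hj hij
    simp only [Finset.coe_range, Set.mem_Iio] at hi hj
    rw [← hq i (by omega), ← hq j (by omega)] at hij
    exact hl.2.getElem_inj_iff.1 hij
  have hset : l.toFinset = (Finset.range (2 * K + 1)).image q := by
    ext v
    rw [List.mem_toFinset, List.mem_iff_getElem, Finset.mem_image]
    constructor
    · rintro ⟨k, hk, rfl⟩
      exact ⟨k, by simp; omega, (hq k hk).symm⟩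
    · rintro ⟨k, hk, rfl⟩
      rw [Finset.mem_range] at hk
      exact ⟨k, by omega, hq k (by omega)⟩
  have hq0 : q 0 ∈ l.head? := by
    rw [← hq 0 (by omega)]
    exact List.head_mem_zero (by omega)
  have hqL : q (2 * K) ∈ l.getLast? := by
    rw [← hq (2 * K) (by omega)]
    exact List.getLast_mem_last (by omega)
  have hqS : ∀ k < 2 * K + 1, q k ∈ S := by
    intro k hk
    rw [← hq k (by omega)]
    exact hlS _ (List.getElem_mem _)
  have hcross : ∀ k, k < 2 * K → G.Adj (q (2 * K)) (q k) → ¬ G.Adj (q 0) (q (k + 1)) := by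
    intro k hk hb ha
    have := hC _ (hl.hasCycleOn_of_consecutive (List.split_at_consecutive (k := k) (by omega))
      hq0 hqL (by rwa [hq]) (by rwa [hq]))
    omega
  have hskip : ∀ k, k + 1 < 2 * K → G.Adj (q (2 * K)) (q k) → ¬ G.Adj (q 0) (q (k + 2)) := by
    intro k hk hb ha
    have hs : l = l.take k ++ l[k] :: l[k + 1] :: l[k + 2] :: l.drop (k + 3) := by
      rw [← List.drop_eq_getElem_cons, ← List.drop_eq_getElem_cons, ← List.drop_eq_getElem_cons,
        List.take_append_drop]
    have hc := hC _ (hl.hasCycleOn_of_skip hs hq0 hqL (by rwa [hq]) (by rwa [hq]))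
    have hsub : (l.take k ++ l[k] :: l[k + 2] :: l.drop (k + 3)).Sublist l := by
      conv_rhs => rw [hs]
      exact (List.Sublist.refl _).append (.cons_cons _ (.cons _ (.refl _)))
    rw [List.toFinset_card_of_nodup (hsub.nodup hl.2)] at hc
    simp at hc
    omega
  have hlrS : ∀ v ∈ l.reverse, v ∈ S := fun v hv => hlS v (List.mem_reverse.1 hv)
  have hdA := degIn_eq_of_longest hl hlS hmax hq0
  have hdB := degIn_eq_of_longest hl.reverse hlrS (by simpa using hmax) (a := q (2 * K))
    (by simpa using hqL)
  rw [List.toFinset_reverse] at hdB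
  rw [hset, degIn_image hinj] at hdA hdB
  have hA := hdeg _ (hqS 0 (by omega))
  have hB := hdeg _ (hqS (2 * K) (by omega))
  rw [← hdA] at hA
  rw [← hdB] at hB
  set A := (Finset.range (2 * K + 1)).filter fun k => G.Adj (q 0) (q k) with hAdef
  set B := (Finset.range (2 * K + 1)).filter fun k => G.Adj (q (2 * K)) (q k) with hBdef
  have memA : ∀ k, k ∈ A ↔ k < 2 * K + 1 ∧ G.Adj (q 0) (q k) := by simp [hAdef]
  have memB : ∀ k, k ∈ B ↔ k < 2 * K + 1 ∧ G.Adj (q (2 * K)) (q k) := by simp [hBdef]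
  have hB1 : ∀ k ∈ B, k < 2 * K := by
    intro k hk
    rw [memB] at hk
    have : k ≠ 2 * K := by
      rintro rfl
      exact G.loopless.irrefl _ hk.2
    omega
  have hA1 : ∀ k ∈ A, 1 ≤ k ∧ k ≤ 2 * K := by
    intro k hk
    rw [memA] at hk
    have : k ≠ 0 := by
      rintro rfl
      exact G.loopless.irrefl _ hk.2
    omega
  have hdisj : Disjoint A (B.image Nat.succ) := by
    rw [Finset.disjoint_left]
    intro k hk hk'
    obtain ⟨j, hj, rfl⟩ := Finset.mem_image.1 hk'
    exact hcross j (hB1 j hj) ((memB j).1 hj).2 ((memA _).1 hk).2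
  have hcB : (B.image Nat.succ).card = B.card :=
    Finset.card_image_of_injective _ Nat.succ_injective
  have hsubU : A ∪ B.image Nat.succ ⊆ Finset.Icc 1 (2 * K) := by
    intro k hk
    rw [Finset.mem_Icc]
    rcases Finset.mem_union.1 hk with hk | hk
    · exact hA1 k hk
    · obtain ⟨j, hj, rfl⟩ := Finset.mem_image.1 hk
      have := hB1 j hj
      omega
  have hcU := Finset.card_union_of_disjoint hdisj
  have hU : A ∪ B.image Nat.succ = Finset.Icc 1 (2 * K) :=
    Finset.eq_of_subset_of_card_le hsubU (by rw [hcU, hcB, Nat.card_Icc]; omega)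
  have hcU' : A.card + B.card = 2 * K := by
    rw [hU, hcB, Nat.card_Icc] at hcU
    omega
  have hor : ∀ k, 1 ≤ k → k ≤ 2 * K → k ∉ A → k - 1 ∈ B := by
    intro k h1 h2 hk
    have : k ∈ A ∪ B.image Nat.succ := by rw [hU, Finset.mem_Icc]; exact ⟨h1, h2⟩
    rcases Finset.mem_union.1 this with h | h
    · exact absurd h hk
    · obtain ⟨j, hj, rfl⟩ := Finset.mem_image.1 h
      simpa using hj
  have hup : ∀ k ∈ B, ∀ d, k + d < 2 * K → k + d ∈ B := by
    intro k hk d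
    induction d with
    | zero => intro _; exact hk
    | succ d ih =>
      intro hd
      have h1 := ih (by omega)
      have h2 := hor (k + d + 2) (by omega) (by omega) (fun h =>
        hskip (k + d) (by omega) ((memB _).1 h1).2 ((memA _).1 h).2)
      exact h2
  have hBK : ∀ k, K ≤ k → k < 2 * K → k ∈ B := by
    intro k h1 h2
    by_contra hk
    have hsub : B ⊆ Finset.Ioo k (2 * K) := by
      intro j hj
      rw [Finset.mem_Ioo]
      refine ⟨?_, hB1 j hj⟩
      by_contra! hjk
      exact hk (by simpa [Nat.add_sub_of_le hjk] using hup j hj (k - j) (by omega))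
    have := Finset.card_le_card hsub
    rw [Nat.card_Ioo] at this
    omega
  have hAK : ∀ k, 1 ≤ k → k ≤ K → k ∈ A := by
    intro k h1 h2
    by_contra hk
    have hk' := hor k h1 (by omega) hk
    have hsub : Finset.Ico (k - 1) (2 * K) ⊆ B := by
      intro j hj
      rw [Finset.mem_Ico] at hj
      simpa [Nat.add_sub_of_le hj.1] using hup _ hk' (j - (k - 1)) (by omega)
    have := Finset.card_le_card hsub
    rw [Nat.card_Ico] at this
    omega
  have hrot : ∀ i < K, ∀ w ∈ S, G.Adj (q i) w → ∃ k ≤ K, q k = w := by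
    intro i hi w hw hiw
    have hsp : l = l.take (i + 1) ++ l.drop (i + 1) := (List.take_append_drop _ _).symm
    have hlp : IsPathList G (l.take (i + 1) ++ l.drop (i + 1)) := by rwa [← hsp]
    have hhead : q i ∈ (l.take (i + 1)).getLast? := by
      rw [← hq i (by omega), List.take_succ_eq_append_getElem (by omega),
        List.getLast?_append]
      simp only [List.getLast?_singleton, Option.some_or, Option.mem_def]
    have hfst : q 0 ∈ (l.take (i + 1)).head? := by
      rw [Option.mem_def] at *
      rw [List.head?_take]
      simpa using hq0
    have hnxt : q (i + 1) ∈ (l.drop (i + 1)).head? := by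
      rw [← hq (i + 1) (by omega), List.drop_eq_getElem_cons (by omega)]
      simp
    have hrp : IsPathList G ((l.take (i + 1)).reverse ++ l.drop (i + 1)) := by
      refine hlp.left_of_append.reverse.append hlp.right_of_append
        (fun z hz hz' => hlp.disjoint_of_append (List.mem_reverse.1 hz) hz') ?_
      intro x hx y hy
      rw [List.getLast?_reverse] at hx
      rw [Option.mem_def] at *
      obtain rfl : q 0 = x := by simpa [hfst] using hx
      obtain rfl : q (i + 1) = y := by simpa [hnxt] using hy
      exact ((memA _).1 (hAK (i + 1) (by omega) (by omega))).2
    have hrmem : ∀ v, v ∈ (l.take (i + 1)).reverse ++ l.drop (i + 1) ↔ v ∈ l := by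
      intro v
      conv_rhs => rw [hsp]
      rw [List.mem_append, List.mem_append, List.mem_reverse]
    have hrlen : ((l.take (i + 1)).reverse ++ l.drop (i + 1)).length = l.length := by
      simp; omega
    have hrhead : q i ∈ ((l.take (i + 1)).reverse ++ l.drop (i + 1)).head? := by
      rw [List.head?_append, List.head?_reverse]
      rw [Option.mem_def] at *
      simp [hhead]
    have hrlast : q (2 * K) ∈ ((l.take (i + 1)).reverse ++ l.drop (i + 1)).getLast? := by
      rw [hsp, List.getLast?_append] at hqL
      rw [List.getLast?_append]
      rw [Option.mem_def] at *
      rcases hd : (l.drop (i + 1)).getLast? with _ | c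
      · rw [List.getLast?_eq_none_iff] at hd
        simp [hd] at hnxt
      · simpa [hd] using hqL
    have hwl : w ∈ l := by
      rw [← hrmem]
      exact adj_mem_of_longest hrp (fun v hv => hlS v ((hrmem v).1 hv)) (by rwa [hrlen])
        hrhead hw hiw
    obtain ⟨k, hk, rfl⟩ := List.mem_iff_getElem.1 hwl
    rw [hq k hk] at hiw ⊢
    by_contra! hno
    have hkK : K < k := by
      by_contra! h
      exact hno k h rfl
    obtain ⟨k, rfl⟩ : ∃ j, k = j + 1 := ⟨k - 1, by omega⟩
    have hb := ((memB _).1 (hBK k (by omega) (by omega))).2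
    have hsplit : (l.take (i + 1)).reverse ++ l.drop (i + 1) =
        ((l.take (i + 1)).reverse ++ (l.drop (i + 1)).take (k - (i + 1))) ++
          q k :: q (k + 1) :: l.drop (k + 2) := by
      rw [List.append_assoc]
      congr 1
      rw [← hq k (by omega), ← hq (k + 1) (by omega), ← List.drop_eq_getElem_cons,
        ← List.drop_eq_getElem_cons]
      conv_lhs => rw [← List.take_append_drop (k - (i + 1)) (l.drop (i + 1))]
      rw [List.drop_drop]
      congr 2
      omega
    have hc := hC _ (hrp.hasCycleOn_of_consecutive hsplit hrhead hrlast hiw hb)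
    rw [List.toFinset_card_of_nodup hrp.2, hrlen] at hc
    omega
  refine ⟨(Finset.range K).image q, ?_, ?_, ?_, ?_⟩
  · intro v hv
    obtain ⟨k, hk, rfl⟩ := Finset.mem_image.1 hv
    rw [Finset.mem_range] at hk
    exact hqS k (by omega)
  · rw [Finset.card_image_of_injOn (hinj.mono ?_), Finset.card_range]
    intro k hk
    simp at hk ⊢
    omega
  · have hsub : (Finset.Ico K (2 * K + 1)).image q ⊆ S \ (Finset.range K).image q := by
      intro v hv
      obtain ⟨k, hk, rfl⟩ := Finset.mem_image.1 hv
      rw [Finset.mem_Ico] at hk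
      rw [Finset.mem_sdiff]
      refine ⟨hqS k (by omega), fun h => ?_⟩
      obtain ⟨j, hj, hjk⟩ := Finset.mem_image.1 h
      rw [Finset.mem_range] at hj
      have := hinj (by simp; omega) (by simp; omega) hjk
      omega
    have := Finset.card_le_card hsub
    rw [Finset.card_image_of_injOn (hinj.mono ?_), Nat.card_Ico] at this
    · omega
    · intro k hk
      simp at hk ⊢
      omega
  · intro x hx
    obtain ⟨i, hi, rfl⟩ := Finset.mem_image.1 hx
    rw [Finset.mem_range] at hi
    have : (S \ (Finset.range K).image q).filter (G.Adj (q i)) ⊆ {q K} := by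
      intro w hw
      rw [Finset.mem_filter, Finset.mem_sdiff] at hw
      obtain ⟨k, hk, rfl⟩ := hrot i hi w hw.1.1 hw.2
      rcases hk.lt_or_eq with hk | rfl
      · exact absurd (Finset.mem_image_of_mem q (Finset.mem_range.2 hk)) hw.1.2
      · simp
    simpa [degIn] using Finset.card_le_card this

/-- A dense set of minimal size carries a spanning cycle when no cycle is long. -/
theorem hasCycleOn_of_dense {K : ℕ} (hK : 3 ≤ K) {S : Finset V} (hS : K + 2 ≤ S.card)
    (hP : ∀ l, IsPathList G l → l.length ≤ 2 * K + 1)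
    (hC : ∀ T, HasCycleOn G T → T.card < 2 * K) (hdeg : ∀ v ∈ S, K ≤ degIn G S v)
    (hX : ∀ X ⊆ S, X.Nonempty → K + 1 ≤ (S \ X).card →
        degSum G (S \ X) + 2 * (K - 1) * X.card < degSum G S) : HasCycleOn G S := by
  obtain ⟨l, ⟨hl, hlS⟩, hmax⟩ := exists_longest_list
    (P := fun l => IsPathList G l ∧ ∀ v ∈ l, v ∈ S) (2 * K + 1)
    ⟨[], ⟨.nil, List.nodup_nil⟩, by simp⟩ fun l hl => hP l hl.1
  replace hmax : ∀ l', IsPathList G l' → (∀ v ∈ l', v ∈ S) → l'.length ≤ l.length :=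
    fun l' h h' => hmax l' ⟨h, h'⟩
  have hne : l ≠ [] := by
    rintro rfl
    obtain ⟨v, hv⟩ := Finset.card_pos.1 (by omega : 0 < S.card)
    simpa using hmax [v] (.singleton v) (by simpa using hv)
  obtain ⟨a, ha⟩ := List.exists_head_of_ne_nil hne
  obtain ⟨b, hb⟩ := List.exists_head_of_ne_nil (l := l.reverse) (by simpa using hne)
  have hda := degIn_eq_of_longest hl hlS hmax ha
  have hdb := degIn_eq_of_longest hl.reverse (by simpa using hlS) (by simpa using hmax) hb
  rw [List.toFinset_reverse] at hdb
  have haS := hdeg a (hlS a (List.mem_of_mem_head? ha))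
  have hbS := hdeg b (hlS b (by simpa using List.mem_of_mem_head? hb))
  have hlen := hP l hl
  have hcl : l.toFinset.card = l.length := List.toFinset_card_of_nodup hl.2
  rcases Nat.lt_or_ge (2 * K) l.length with hlt | hle
  · obtain ⟨X, hXS, hXc, hSX, h1⟩ := exists_sparse_of_longest hl hlS hmax (by omega) (by omega) hC
      hdeg
    have h2 := hX X hXS (Finset.card_pos.1 (by omega)) hSX
    have h3 := degSum_eq_sdiff (G := G) hXS
    have h4 := degSum_le (G := G) X
    have h5 : ∑ x ∈ X, degIn G (S \ X) x ≤ X.card * 1 := by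
      rw [← smul_eq_mul]
      exact Finset.sum_le_card_nsmul _ _ _ h1
    rw [hXc] at *
    obtain ⟨k, rfl⟩ : ∃ k, K = k + 3 := ⟨K - 3, by omega⟩
    simp only [show k + 3 - 1 = k + 2 by omega] at *
    nlinarith
  · have hcyc := hl.hasCycleOn_of_degIn ha (by simpa using hb) (by omega)
    have hlK := hC _ hcyc
    have hTS : l.toFinset ⊆ S := fun v hv => hlS v (List.mem_toFinset.1 hv)
    have hout : ∀ v ∈ l.toFinset, ∀ w ∈ S \ l.toFinset, ¬ G.Adj v w := by
      intro v hv w hw hvw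
      rw [Finset.mem_sdiff] at hw
      obtain ⟨l', hl', hset, hlen'⟩ := hcyc.exists_path_insert hv hw.2 hvw
      have := hmax _ hl' (by
        intro z hz
        rcases List.mem_cons.1 hz with rfl | hz
        · exact hw.1
        · exact hTS (hset ▸ List.mem_toFinset.2 hz))
      simp at this
      omega
    by_cases hTe : l.toFinset = S
    · rwa [← hTe]
    · exfalso
      obtain ⟨w, hw⟩ : (S \ l.toFinset).Nonempty := by
        rw [Finset.sdiff_nonempty]
        exact fun h => hTe (Finset.Subset.antisymm hTS h)
      have hz : ∀ v ∈ l.toFinset, degIn G (S \ l.toFinset) v = 0 := by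
        intro v hv
        rw [degIn, Finset.card_eq_zero, Finset.filter_eq_empty_iff]
        exact fun w hw => hout v hv w hw
      have hbig : K + 1 ≤ (S \ l.toFinset).card := by
        have h1 := hdeg w (Finset.mem_sdiff.1 hw).1
        have h2 := degIn_sdiff_add (G := G) hTS w
        have h3 : degIn G l.toFinset w = 0 := by
          rw [degIn, Finset.card_eq_zero, Finset.filter_eq_empty_iff]
          exact fun v hv h => hout v hv w hw h.symm
        have h4 := degIn_lt_card (G := G) hw
        omega
      have h2 := hX _ hTS (Finset.card_pos.1 (by
        rw [hcl]; exact List.length_pos_of_ne_nil hne)) hbig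
      have h3 := degSum_eq_sdiff (G := G) hTS
      have h4 := degSum_le (G := G) l.toFinset
      rw [Finset.sum_eq_zero hz] at h3
      have h5 : l.toFinset.card * (l.toFinset.card - 1) ≤ l.toFinset.card * (2 * (K - 1)) :=
        Nat.mul_le_mul_left _ (by omega)
      rw [mul_comm] at h5
      nlinarith

end Hamiltonian

section Peeling

variable {V : Type*} [DecidableEq V] {G : SimpleGraph V} [DecidableRel G.Adj]

/-- Every proper subset of `W` containing `D` sends an edge to the rest of `W`. -/
def CutConnected (G : SimpleGraph V) (D W : Finset V) : Prop :=
  ∀ A : Finset V, D ⊆ A → A ⊂ W → ∃ a ∈ A, ∃ w ∈ W \ A, G.Adj a w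

/-- A nonempty path of `W \ D` whose first vertex has a neighbour in `D`. -/
def IsOutward (G : SimpleGraph V) (D W : Finset V) (l : List V) : Prop :=
  IsPathList G l ∧ (∀ v ∈ l, v ∈ W \ D) ∧ l ≠ [] ∧ ∀ x ∈ l.head?, ∃ d ∈ D, G.Adj d x

theorem exists_adj_of_chain {A : Finset V} :
    ∀ {l : List V}, l.IsChain G.Adj → (∀ x ∈ l.head?, ∃ d ∈ A, G.Adj d x) →
      (∃ v ∈ l, v ∉ A) → ∃ a ∈ A, ∃ w ∈ l, w ∉ A ∧ G.Adj a w
  | [], _, _, h => by simp at h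
  | b :: l, hc, hd, hv => by
    by_cases hb : b ∈ A
    · obtain ⟨a, ha, w, hw, h⟩ := exists_adj_of_chain (l := l) hc.tail (by
        intro x hx
        exact ⟨b, hb, (List.isChain_cons.1 hc).1 x hx⟩) (by
        obtain ⟨v, hv, hvA⟩ := hv
        rcases List.mem_cons.1 hv with rfl | hv
        · exact absurd hb hvA
        · exact ⟨v, hv, hvA⟩)
      exact ⟨a, ha, w, List.mem_cons_of_mem _ hw, h⟩
    · obtain ⟨d, hd, hdb⟩ := hd b (by simp)
      exact ⟨d, hd, b, by simp, hb, hdb⟩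

/-- Removing `Y` keeps `W` cut-connected if the neighbours of `Y` lie in `D`, in `Y`, or on a path
attached to `D`. -/
theorem CutConnected.sdiff {D W Y : Finset V} (hW : CutConnected G D W)
    (hYW : Y ⊆ W) {p : List V}
    (hp : p.IsChain G.Adj) (hpW : ∀ v ∈ p, v ∈ W \ Y) (hpD : ∀ x ∈ p.head?, ∃ d ∈ D, G.Adj d x)
    (hY : ∀ y ∈ Y, ∀ w ∈ W, G.Adj y w → w ∈ D ∨ w ∈ Y ∨ w ∈ p) : CutConnected G D (W \ Y) := by
  intro A hDA hA
  by_cases hpA : ∃ v ∈ p, v ∉ A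
  · obtain ⟨a, ha, w, hw, hwA, haw⟩ := exists_adj_of_chain hp
      (fun x hx => (hpD x hx).imp fun d hd => ⟨hDA hd.1, hd.2⟩) hpA
    exact ⟨a, ha, w, Finset.mem_sdiff.2 ⟨hpW w hw, hwA⟩, haw⟩
  · push Not at hpA
    obtain ⟨hAs, hAn⟩ := Finset.ssubset_iff_subset_ne.1 hA
    have hss : A ∪ Y ⊂ W := by
      rw [Finset.ssubset_iff_subset_ne]
      refine ⟨Finset.union_subset (hAs.trans Finset.sdiff_subset) hYW, fun h => hAn ?_⟩
      refine Finset.Subset.antisymm hAs fun v hv => ?_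
      rw [← h, Finset.mem_sdiff, Finset.mem_union] at hv
      tauto
    obtain ⟨a, ha, w, hw, haw⟩ := hW (A ∪ Y) (hDA.trans Finset.subset_union_left) hss
    rw [Finset.mem_sdiff, Finset.mem_union, not_or] at hw
    rcases Finset.mem_union.1 ha with ha | ha
    · exact ⟨a, ha, w, by simp only [Finset.mem_sdiff]; tauto, haw⟩
    · exfalso
      rcases hY a ha w hw.1 haw with h | h | h
      · exact hw.2.1 (hDA h)
      · exact hw.2.2 h
      · exact hw.2.1 (hpA w h)

/-- A longest cycle `f` through a set `S` of vertices of large degree. -/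
structure IsLongestThrough (G : SimpleGraph V) [DecidableRel G.Adj] (K : ℕ) {N : ℕ} [NeZero N]
    (S : Finset V) (f : ZMod N → V) : Prop where
  cyc : IsCyc G f
  sub : S ⊆ Finset.univ.image f
  lt : N < 2 * K
  deg : ∀ v ∈ S, K ≤ degIn G (Finset.univ.image f) v
  longest : ∀ T, HasCycleOn G T → S ⊆ T → T.card ≤ N

variable {K N : ℕ} [NeZero N] {S : Finset V} {f : ZMod N → V}

theorem IsLongestThrough.neg (h : IsLongestThrough G K S f) :
    IsLongestThrough G K S fun i => f (-i) where
  cyc := h.cyc.neg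
  sub := by rw [image_neg]; exact h.sub
  lt := h.lt
  deg := by rw [image_neg]; exact h.deg
  longest := h.longest

/-- Indices of the vertices of the cycle outside `S`. -/
def offIdx (S : Finset V) (f : ZMod N → V) : Finset (ZMod N) :=
  Finset.univ.filter fun i => f i ∉ S

/-- Indices of the neighbours of `v` on the cycle. -/
def nbrIdx (G : SimpleGraph V) [DecidableRel G.Adj] (f : ZMod N → V) (v : V) : Finset (ZMod N) :=
  Finset.univ.filter fun i => G.Adj v (f i)

theorem mem_offIdx {i : ZMod N} : i ∈ offIdx S f ↔ f i ∉ S := by simp [offIdx]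

theorem mem_nbrIdx {v : V} {i : ZMod N} : i ∈ nbrIdx G f v ↔ G.Adj v (f i) := by simp [nbrIdx]

theorem card_nbrIdx (hf : Function.Injective f) (v : V) :
    (nbrIdx G f v).card = degIn G (Finset.univ.image f) v := by
  rw [degIn, Finset.filter_image, Finset.card_image_of_injective _ hf, nbrIdx]

theorem card_offIdx (hf : Function.Injective f) (hS : S ⊆ Finset.univ.image f) :
    (offIdx S f).card + S.card = N := by
  have h1 : ((offIdx S f).image f) = Finset.univ.image f \ S := by
    ext v
    simp only [Finset.mem_image, mem_offIdx, Finset.mem_sdiff, Finset.mem_univ, true_and]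
    constructor
    · rintro ⟨i, hi, rfl⟩
      exact ⟨⟨i, rfl⟩, hi⟩
    · rintro ⟨⟨i, rfl⟩, hi⟩
      exact ⟨i, hi, rfl⟩
  rw [← Finset.card_image_of_injective _ hf, h1, Finset.card_sdiff_add_card_eq_card hS,
    Finset.card_image_of_injective _ hf, Finset.card_univ, ZMod.card]

theorem IsLongestThrough.off_or_off (h : IsLongestThrough G K S f) {i i' : ZMod N} (hii : i ≠ i')
    {X : List V} (hX : IsPathList G X) (hfX : ∀ j, f j ∉ X) {x y : V} (hx : x ∈ X.head?)
    (hy : y ∈ X.getLast?) (hix : i ∈ nbrIdx G f x) (hiy : i' ∈ nbrIdx G f y) :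
    i + 1 ∈ offIdx S f ∨ i' + 1 ∈ offIdx S f := by
  by_contra! hno
  rw [mem_offIdx, mem_offIdx, not_not, not_not] at hno
  have hc := h.cyc.hasCycleOn_insert hii hX hfX hx hy (mem_nbrIdx.1 hix).symm
    (mem_nbrIdx.1 hiy).symm (Or.inr (by
      have := h.deg _ hno.1
      have := h.deg _ hno.2
      have := h.lt
      omega))
  have hle := h.longest _ hc (h.sub.trans Finset.subset_union_left)
  have hd : Disjoint (Finset.univ.image f) X.toFinset := by
    rw [Finset.disjoint_left]
    intro v hv hv'
    obtain ⟨j, -, rfl⟩ := Finset.mem_image.1 hv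
    exact hfX j (List.mem_toFinset.1 hv')
  rw [Finset.card_union_of_disjoint hd, h.cyc.card_image] at hle
  have : 0 < X.toFinset.card :=
    Finset.card_pos.2 ⟨x, List.mem_toFinset.2 (List.mem_of_mem_head? hx)⟩
  omega

theorem card_le_of_subset_preimage_succ {M O : Finset (ZMod N)} (h : ∀ i ∈ M, i + 1 ∈ O) :
    M.card ≤ O.card :=
  Finset.card_le_card_of_injOn (· + 1) h (fun _ _ _ _ hab => add_right_cancel hab)

theorem IsLongestThrough.degIn_le (h : IsLongestThrough G K S f) {z : V} (hz : ∀ j, f j ≠ z) :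
    degIn G (Finset.univ.image f) z ≤ (offIdx S f).card + 1 := by
  rw [← card_nbrIdx h.cyc.1]
  have hfree : ((nbrIdx G f z).filter fun i => i + 1 ∉ offIdx S f).card ≤ 1 := by
    rw [Finset.card_le_one]
    intro i hi i' hi'
    rw [Finset.mem_filter] at hi hi'
    by_contra hne
    have := h.off_or_off hne (.singleton z) (by simpa using hz) (x := z) (y := z) (by simp)
      (by simp) hi.1 hi'.1
    tauto
  have hoff : ((nbrIdx G f z).filter fun i => i + 1 ∈ offIdx S f).card ≤ (offIdx S f).card :=
    card_le_of_subset_preimage_succ fun i hi => (Finset.mem_filter.1 hi).2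
  have := Finset.card_filter_add_card_filter_not (s := nbrIdx G f z)
    (fun i => i + 1 ∈ offIdx S f)
  omega

/-- If both ends of an outside path have as many neighbours on the cycle as possible, the first end
sees the predecessors of all vertices off `S`. -/
theorem IsLongestThrough.sub_one_mem_nbrIdx (h : IsLongestThrough G K S f)
    {X : List V} (hX : IsPathList G X) (hfX : ∀ j, f j ∉ X) {x y : V} (hx : x ∈ X.head?)
    (hy : y ∈ X.getLast?) (hcx : (nbrIdx G f x).card = (offIdx S f).card + 1)
    (hcy : (nbrIdx G f y).card = (offIdx S f).card + 1) {o : ZMod N} (ho : o ∈ offIdx S f) :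
    o - 1 ∈ nbrIdx G f x := by
  have hsplit : ∀ z, ((nbrIdx G f z).filter fun i => i + 1 ∈ offIdx S f).card +
      ((nbrIdx G f z).filter fun i => i + 1 ∉ offIdx S f).card = (nbrIdx G f z).card := fun z =>
    Finset.card_filter_add_card_filter_not (s := nbrIdx G f z) (fun i => i + 1 ∈ offIdx S f)
  have hoff : ∀ z, ((nbrIdx G f z).filter fun i => i + 1 ∈ offIdx S f).card ≤
      (offIdx S f).card := fun z =>
    card_le_of_subset_preimage_succ fun i hi => (Finset.mem_filter.1 hi).2
  obtain ⟨i', hi'⟩ : ((nbrIdx G f y).filter fun i => i + 1 ∉ offIdx S f).Nonempty := by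
    rw [← Finset.card_pos]
    have := hsplit y
    have := hoff y
    omega
  rw [Finset.mem_filter] at hi'
  have hone : ((nbrIdx G f x).filter fun i => i + 1 ∉ offIdx S f).card ≤ 1 := by
    rw [Finset.card_le_one_iff_subset_singleton]
    refine ⟨i', fun i hi => ?_⟩
    rw [Finset.mem_filter] at hi
    rw [Finset.mem_singleton]
    by_contra hne
    have := h.off_or_off hne hX hfX hx hy hi.1 hi'.1
    tauto
  have himg : ((nbrIdx G f x).filter fun i => i + 1 ∈ offIdx S f).image (· + 1) =
      offIdx S f := by
    refine Finset.eq_of_subset_of_card_le ?_ ?_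
    · intro j hj
      obtain ⟨i, hi, rfl⟩ := Finset.mem_image.1 hj
      exact (Finset.mem_filter.1 hi).2
    · rw [Finset.card_image_of_injective _ (add_left_injective 1)]
      have := hsplit x
      omega
  rw [← himg] at ho
  obtain ⟨i, hi, rfl⟩ := Finset.mem_image.1 ho
  simpa using (Finset.mem_filter.1 hi).1

/-- Replacing one vertex of a cycle by an outside path. -/
theorem IsCyc.hasCycleOn_replace (hf : IsCyc G f) (hN : 1 < N) {X : List V}
    (hX : IsPathList G X) (hfX : ∀ j, f j ∉ X) {x y : V} (hx : x ∈ X.head?)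
    (hy : y ∈ X.getLast?) {o : ZMod N} (hox : G.Adj (f (o - 1)) x) (hoy : G.Adj y (f (o + 1))) :
    HasCycleOn G ((Finset.univ.image f).erase (f o) ∪ X.toFinset) := by
  have hset : (arc f (o + 1) (N - 1)).toFinset = (Finset.univ.image f).erase (f o) := by
    have h1 := arc_add f (o + 1) (N - 1) 1
    rw [Nat.sub_add_cancel hN.le, Nat.cast_sub hN.le, ZMod.natCast_self,
      show o + 1 + (0 - ((1 : ℕ) : ZMod N)) = o by push_cast; ring] at h1
    have h2 : arc f o 1 = [f o] := by simp [arc]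
    have h3 := (hf.isPathList_arc (o + 1) le_rfl).2
    have h4 := toFinset_arc f (o + 1)
    rw [h1, h2] at h3 h4
    rw [← h4, List.toFinset_append]
    have h5 : f o ∉ arc f (o + 1) (N - 1) := fun h =>
      (List.nodup_append'.1 h3).2.2 h (by simp)
    ext v
    simp only [List.mem_toFinset, Finset.mem_erase, Finset.mem_union, List.mem_singleton]
    constructor
    · intro hv
      exact ⟨fun h => h5 (h ▸ hv), Or.inl hv⟩
    · tauto
  have hlast : f (o - 1) ∈ (arc f (o + 1) (N - 1)).getLast? :=
    getLast_arc f _ _ (by omega) (by rw [Nat.cast_sub hN.le, ZMod.natCast_self]; push_cast; ring)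
  have hhead : f (o + 1) ∈ (arc f (o + 1) (N - 1)).head? := head_arc f _ (by omega)
  have hp : IsPathList G (arc f (o + 1) (N - 1) ++ X) := by
    refine (hf.isPathList_arc _ (by omega)).append hX ?_ ?_
    · intro v hv hv'
      obtain ⟨j, -, rfl⟩ := mem_arc.1 hv
      exact hfX _ hv'
    · intro u hu v hv
      rw [Option.mem_def] at *
      obtain rfl : f (o - 1) = u := by simpa [hlast] using hu
      obtain rfl : x = v := by simpa [hx] using hv
      exact hox
  have := hp.hasCycleOn (a := f (o + 1)) (b := y) (by
    rw [List.head?_append]; rw [Option.mem_def] at *; simp [hhead]) (by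
    rw [List.getLast?_append]; rw [Option.mem_def] at *; simp [hy]) hoy.symm
  rwa [List.toFinset_append, hset] at this

end Peeling

section PeelStep

variable {V : Type*} [DecidableEq V] {G : SimpleGraph V} [DecidableRel G.Adj]
  {K N : ℕ} [NeZero N] {S W : Finset V} {f : ZMod N → V}

theorem IsOutward.not_mem_cycle {l : List V} (hl : IsOutward G (Finset.univ.image f) W l)
    (j : ZMod N) : f j ∉ l := fun h =>
  (Finset.mem_sdiff.1 (hl.2.1 _ h)).2 (Finset.mem_image_of_mem f (Finset.mem_univ j))

theorem IsOutward.length_add_le (hf : IsCyc G f) {B : ℕ}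
    (hP : ∀ l, IsPathList G l → l.length ≤ B) {l : List V}
    (hl : IsOutward G (Finset.univ.image f) W l) : N + l.length ≤ B := by
  have hN := Nat.pos_of_ne_zero (NeZero.ne N)
  obtain ⟨x, hx⟩ := List.exists_head_of_ne_nil hl.2.2.1
  obtain ⟨d, hd, hdx⟩ := hl.2.2.2 x hx
  obtain ⟨i, -, rfl⟩ := Finset.mem_image.1 hd
  have hlast : f i ∈ (arc f (i + 1) N).getLast? := getLast_arc f _ _ hN (by simp)
  have := hP _ ((hf.isPathList_arc (i + 1) le_rfl).append hl.1 (by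
    intro v hv hv'
    obtain ⟨j, -, rfl⟩ := mem_arc.1 hv
    exact hl.not_mem_cycle _ hv') (by
    intro u hu v hv
    rw [Option.mem_def] at *
    obtain rfl : f i = u := by simpa [hlast] using hu
    obtain rfl : x = v := by simpa [hx] using hv
    exact hdx))
  simpa [length_arc] using this

variable {D : Finset V} {l : List V} {z : V}

theorem IsOutward.concat (hl : IsOutward G D W l) {w : V} (hz : z ∈ l.getLast?) (hw : w ∈ W)
    (hwD : w ∉ D) (hwl : w ∉ l) (hzw : G.Adj z w) : IsOutward G D W (l ++ [w]) := by
  refine ⟨hl.1.concat hwl hz hzw, fun v hv => ?_, by simp, fun x hx => hl.2.2.2 x ?_⟩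
  · rcases List.mem_append.1 hv with hv | hv
    · exact hl.2.1 v hv
    · rw [List.mem_singleton.1 hv]
      exact Finset.mem_sdiff.2 ⟨hw, hwD⟩
  · rwa [List.head?_append_of_ne_nil _ hl.2.2.1] at hx

theorem IsOutward.adj_mem (hl : IsOutward G D W l)
    (hmax : ∀ l', IsOutward G D W l' → l'.length ≤ l.length) {w : V} (hz : z ∈ l.getLast?)
    (hw : w ∈ W) (hzw : G.Adj z w) : w ∈ D ∨ w ∈ l := by
  by_contra! hno
  have := hmax _ (hl.concat hz hw hno.1 hno.2 hzw)
  simp at this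

theorem IsOutward.cutConnected_erase (hl : IsOutward G D W l)
    (hmax : ∀ l', IsOutward G D W l' → l'.length ≤ l.length) (hz : z ∈ l.getLast?)
    (hW : CutConnected G D W) : CutConnected G D (W \ {z}) := by
  have hs : l.dropLast ++ [z] = l := List.dropLast_append_getLast? z hz
  have hp : IsPathList G (l.dropLast ++ [z]) := by rw [hs]; exact hl.1
  have hzW : z ∈ W := (Finset.mem_sdiff.1 (hl.2.1 z (List.mem_of_getLast? hz))).1
  refine hW.sdiff (Finset.singleton_subset_iff.2 hzW) (p := l.dropLast)
    hp.left_of_append.1 ?_ ?_ ?_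
  · intro v hv
    have h1 := hl.2.1 v (List.mem_of_mem_dropLast hv)
    rw [Finset.mem_sdiff] at h1 ⊢
    refine ⟨h1.1, fun h => hp.disjoint_of_append hv ?_⟩
    simpa using h
  · intro x hx
    refine hl.2.2.2 x ?_
    rw [← hs, List.head?_append]
    rw [Option.mem_def] at *
    simp [hx]
  · intro y hy w hw hyw
    rw [Finset.mem_singleton] at hy
    subst hy
    rcases hl.adj_mem hmax hz hw hyw with h | h
    · exact Or.inl h
    · rw [← hs, List.mem_append] at h
      rw [Finset.mem_singleton]
      simp only [List.mem_singleton] at h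
      tauto

theorem IsOutward.degIn_le_add (hl : IsOutward G D W l)
    (hmax : ∀ l', IsOutward G D W l' → l'.length ≤ l.length) (hz : z ∈ l.getLast?) :
    degIn G W z ≤ degIn G D z + degIn G l.toFinset z := by
  have hd : Disjoint D l.toFinset := by
    rw [Finset.disjoint_right]
    intro v hv
    exact (Finset.mem_sdiff.1 (hl.2.1 v (List.mem_toFinset.1 hv))).2
  rw [← degIn_union hd]
  refine Finset.card_le_card fun w hw => ?_
  rw [Finset.mem_filter] at hw ⊢
  rw [Finset.mem_union, List.mem_toFinset]
  exact ⟨hl.adj_mem hmax hz hw.1 hw.2, hw.2⟩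

theorem adj_of_degIn_eq {T : Finset V} (hz : z ∈ T) (h : T.card ≤ degIn G T z + 1) {v : V}
    (hv : v ∈ T) (hvz : v ≠ z) : G.Adj z v := by
  have h1 : T.filter (G.Adj z) ⊆ T.erase z := by
    intro w hw
    rw [Finset.mem_filter] at hw
    exact Finset.mem_erase.2 ⟨hw.2.ne', hw.1⟩
  have h2 := Finset.eq_of_subset_of_card_le h1 (by
    rw [Finset.card_erase_of_mem hz]
    unfold degIn at h
    omega)
  have : v ∈ T.filter (G.Adj z) := h2 ▸ Finset.mem_erase.2 ⟨hvz, hv⟩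
  exact (Finset.mem_filter.1 this).2

/-- Some nonempty set outside a longest cycle through `S` can be removed at low cost. -/
theorem IsLongestThrough.exists_peel (h : IsLongestThrough G K S f)
    (hP : ∀ l, IsPathList G l → l.length ≤ 2 * K + 1) {s σ : ℕ} (hs : S.card + s = 2 * K)
    (hσ : 2 ≤ σ) (hsσ : s ≤ σ) (hDW : Finset.univ.image f ⊆ W) (hne : W ≠ Finset.univ.image f)
    (hW : CutConnected G (Finset.univ.image f) W) :
    ∃ X ⊆ W \ Finset.univ.image f, X.Nonempty ∧ CutConnected G (Finset.univ.image f) (W \ X) ∧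
      degSum G W ≤ degSum G (W \ X) + 2 * σ * X.card := by
  have hO := card_offIdx h.cyc.1 h.sub
  set D := Finset.univ.image f with hD
  have hDN : D.card = N := h.cyc.card_image
  obtain ⟨d, hd, x₀, hx₀, hdx₀⟩ := hW D subset_rfl
    (Finset.ssubset_iff_subset_ne.2 ⟨hDW, fun e => hne e.symm⟩)
  obtain ⟨l₀, hl₀, hmax₀⟩ := exists_longest_list (P := IsOutward G D W) (2 * K + 1)
    ⟨[x₀], .singleton _, by simpa using hx₀, by simp, by simpa using ⟨d, hd, hdx₀⟩⟩
    fun l hl => hP l hl.1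
  have hlenN : ∀ l, IsOutward G D W l → N + l.length ≤ 2 * K + 1 := fun l hl =>
    IsOutward.length_add_le h.cyc hP hl
  have hdl : ∀ l, IsOutward G D W l → l.toFinset.card = l.length := fun l hl =>
    List.toFinset_card_of_nodup hl.1.2
  have hout : ∀ v, v ∉ D → degIn G D v ≤ (offIdx S f).card + 1 := fun v hv =>
    h.degIn_le fun j hj => hv (hj ▸ Finset.mem_image_of_mem f (Finset.mem_univ j))
  by_cases hex : ∃ l z, IsOutward G D W l ∧ l.length = l₀.length ∧ z ∈ l.getLast? ∧
      degIn G W z ≤ σ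
  · obtain ⟨l, z, hl, hlen, hz, hdeg⟩ := hex
    have hzW := hl.2.1 z (List.mem_of_getLast? hz)
    refine ⟨{z}, Finset.singleton_subset_iff.2 hzW, Finset.singleton_nonempty _,
      hl.cutConnected_erase (by rwa [hlen]) hz hW, ?_⟩
    rw [degSum_erase (Finset.mem_sdiff.1 hzW).1, Finset.card_singleton,
      Finset.sdiff_singleton_eq_erase]
    omega
  push Not at hex
  -- every longest outward path is now extremal
  have key : ∀ l z, IsOutward G D W l → l.length = l₀.length → z ∈ l.getLast? →
      l.length + N = 2 * K + 1 ∧ degIn G D z = (offIdx S f).card + 1 ∧ s = σ ∧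
        ∀ v ∈ l, v ≠ z → G.Adj z v := by
    intro l z hl hlen hz
    have h1 := hex l z hl hlen hz
    have h2 := hl.degIn_le_add (by rwa [hlen]) hz
    have hzl := List.mem_of_getLast? hz
    have h3 := degIn_lt_card (G := G) (List.mem_toFinset.2 hzl)
    have h4 := hdl l hl
    have h5 := hlenN l hl
    have h6 := hout z (Finset.mem_sdiff.1 (hl.2.1 z hzl)).2
    refine ⟨by omega, by omega, by omega, fun v hv hvz => ?_⟩
    exact adj_of_degIn_eq (List.mem_toFinset.2 hzl) (by omega) (List.mem_toFinset.2 hv) hvz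
  obtain ⟨z, hz⟩ : ∃ z, z ∈ l₀.getLast? :=
    (List.exists_head_of_ne_nil (l := l₀.reverse) (by simpa using hl₀.2.2.1)).imp
      fun z hz => by simpa using hz
  obtain ⟨x, hx⟩ := List.exists_head_of_ne_nil hl₀.2.2.1
  obtain ⟨hlen, hzdeg, hsσ', hzadj⟩ := key l₀ z hl₀ rfl hz
  have hlr : IsOutward G D W l₀.reverse := by
    refine ⟨hl₀.1.reverse, by simpa using hl₀.2.1, by simpa using hl₀.2.2.1, ?_⟩
    intro y hy
    rw [List.head?_reverse] at hy
    rw [Option.mem_def] at *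
    obtain rfl : z = y := by simpa [hz] using hy
    have : 0 < degIn G D z := by omega
    obtain ⟨w, hw⟩ := Finset.card_pos.1 this
    rw [Finset.mem_filter] at hw
    exact ⟨w, hw.1, hw.2.symm⟩
  obtain ⟨-, hxdeg, -, -⟩ := key l₀.reverse x hlr (by simp) (by simpa using hx)
  have hlt := h.lt
  rcases Nat.eq_zero_or_pos (offIdx S f).card with ht | ht
  · -- the cycle is spanned by `S`: remove the whole path
    have hnb : ∀ y ∈ l₀, ∀ w ∈ W, G.Adj y w → w ∈ D ∨ w ∈ l₀ := by
      intro y hy w hw hyw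
      obtain ⟨l₁, l₂, hs₁⟩ := List.append_of_mem hy
      have hrot : IsOutward G D W (l₁ ++ (y :: l₂).reverse) := by
        rcases eq_or_ne l₁ [] with rfl | hne₁
        · rw [hs₁] at hlr
          simpa using hlr
        have hmem : ∀ v, v ∈ l₁ ++ (y :: l₂).reverse → v ∈ l₀ := by
          intro v hv
          rw [hs₁]
          simpa [or_comm, or_left_comm, or_assoc] using hv
        have hpl : IsPathList G (l₁ ++ y :: l₂) := by rw [← hs₁]; exact hl₀.1
        have hz' : z ∈ (y :: l₂).getLast? := by
          rw [hs₁] at hz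
          simpa using hz
        refine ⟨hpl.left_of_append.append hpl.right_of_append.reverse
          (fun v hv hv' => hpl.disjoint_of_append hv (List.mem_reverse.1 hv')) ?_,
          fun v hv => hl₀.2.1 v (hmem v hv), by simp, ?_⟩
        · intro u hu v hv
          rw [List.head?_reverse] at hv
          have hu' := List.mem_of_getLast? hu
          rw [Option.mem_def] at *
          obtain rfl : z = v := by simpa [hz'] using hv
          refine (hzadj u (by rw [hs₁]; simp [hu']) ?_).symm
          rintro rfl
          exact hpl.disjoint_of_append hu' (List.mem_of_getLast? hz')
        · intro v hv
          refine hl₀.2.2.2 v ?_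
          rw [List.head?_append_of_ne_nil _ hne₁] at hv
          rwa [hs₁, List.head?_append_of_ne_nil _ hne₁]
      have hlen' : (l₁ ++ (y :: l₂).reverse).length = l₀.length := by
        rw [hs₁]; simp
      rcases hrot.adj_mem (by rwa [hlen']) (z := y)
        (by rw [List.getLast?_append, List.getLast?_reverse]; simp) hw hyw with hw' | hw'
      · exact Or.inl hw'
      · right
        rw [hs₁]
        simpa [or_comm, or_left_comm, or_assoc] using hw'
    have hXW : l₀.toFinset ⊆ W \ D := fun v hv => hl₀.2.1 v (List.mem_toFinset.1 hv)
    have hXW' := hXW.trans Finset.sdiff_subset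
    refine ⟨l₀.toFinset, hXW, ⟨x, List.mem_toFinset.2 (List.mem_of_mem_head? hx)⟩,
      hW.sdiff hXW' (p := []) .nil (by simp) (by simp) ?_, ?_⟩
    · intro y hy w hw hyw
      rw [List.mem_toFinset] at hy ⊢
      exact (hnb y hy w hw hyw).imp id Or.inl
    · have h1 := degSum_eq_sdiff (G := G) hXW'
      have h2 := degSum_le (G := G) l₀.toFinset
      have h3 : ∑ v ∈ l₀.toFinset, degIn G (W \ l₀.toFinset) v ≤ l₀.toFinset.card * 1 := by
        rw [← smul_eq_mul]
        refine Finset.sum_le_card_nsmul _ _ _ fun v hv => ?_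
        have h4 : degIn G (W \ l₀.toFinset) v ≤ degIn G D v := by
          refine Finset.card_le_card fun w hw => ?_
          rw [Finset.mem_filter, Finset.mem_sdiff, List.mem_toFinset] at hw
          rw [Finset.mem_filter]
          exact ⟨(hnb v (List.mem_toFinset.1 hv) w hw.1.1 hw.2).resolve_right hw.1.2, hw.2⟩
        have := hout v (Finset.mem_sdiff.1 (hXW hv)).2
        omega
      have h5 : l₀.toFinset.card = s + 1 := by
        rw [hdl l₀ hl₀]
        omega
      rw [h5] at h2 h3 ⊢
      rw [← hsσ'] at hσ ⊢
      simp only [Nat.add_sub_cancel] at h2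
      nlinarith
  · -- replace a vertex off `S` by the path
    exfalso
    obtain ⟨o, ho⟩ := Finset.card_pos.1 ht
    have hfX := hl₀.not_mem_cycle
    have hcx : (nbrIdx G f x).card = (offIdx S f).card + 1 := by
      rw [card_nbrIdx h.cyc.1, hxdeg]
    have hcz : (nbrIdx G f z).card = (offIdx S f).card + 1 := by
      rw [card_nbrIdx h.cyc.1, hzdeg]
    have hox := h.sub_one_mem_nbrIdx hl₀.1 hfX hx hz hcx hcz ho
    have hneg : ∀ A : Finset (ZMod N), (Finset.univ.filter fun i => -i ∈ A).card = A.card := by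
      intro A
      rw [← Finset.card_image_of_injective A neg_injective]
      congr 1
      ext i
      simp only [Finset.mem_filter, Finset.mem_univ, true_and, Finset.mem_image]
      exact ⟨fun hi => ⟨-i, hi, neg_neg i⟩, fun ⟨j, hj, hji⟩ => by rw [← hji]; simpa using hj⟩
    have hnO : (offIdx S fun i => f (-i)).card = (offIdx S f).card := by
      rw [← hneg (offIdx S f)]
      congr 1
      ext i
      simp [offIdx]
    have hnN : ∀ v, (nbrIdx G (fun i => f (-i)) v).card = (nbrIdx G f v).card := by
      intro v
      rw [← hneg (nbrIdx G f v)]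
      congr 1
      ext i
      simp [nbrIdx]
    have hoz := h.neg.sub_one_mem_nbrIdx (o := -o) hl₀.1.reverse (by simpa using fun j => hfX (-j))
      (x := z) (y := x) (by simpa using hz) (by simpa using hx) (by rw [hnN, hnO, hcz])
      (by rw [hnN, hnO, hcx]) (by rw [mem_offIdx] at ho ⊢; simpa using ho)
    rw [mem_nbrIdx] at hox hoz
    have hoz' : G.Adj z (f (o + 1)) := by
      simpa [add_comm] using hoz
    have hN : 1 < N := by
      by_contra hN1
      have hN1 : N = 1 := by have := NeZero.ne N; omega
      have : Subsingleton (ZMod N) := by rw [hN1]; infer_instance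
      exact (h.cyc.2 0).ne (congrArg f (Subsingleton.elim _ _))
    have hc := h.cyc.hasCycleOn_replace hN hl₀.1 hfX hx hz hox.symm hoz'
    have hfo : f o ∉ S := mem_offIdx.1 ho
    have hle := h.longest _ hc (fun v hv => Finset.mem_union_left _
      (Finset.mem_erase.2 ⟨fun e => hfo (e ▸ hv), h.sub hv⟩))
    rw [Finset.card_union_of_disjoint, hdl l₀ hl₀, Finset.card_erase_of_mem
      (Finset.mem_image_of_mem f (Finset.mem_univ o)), h.cyc.card_image] at hle
    · omega
    · rw [Finset.disjoint_left]
      intro v hv hv'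
      obtain ⟨j, -, rfl⟩ := Finset.mem_image.1 (Finset.mem_of_mem_erase hv)
      exact hfX j (List.mem_toFinset.1 hv')

end PeelStep

section NoLongCycle

variable {V : Type*} [DecidableEq V] {G : SimpleGraph V} [DecidableRel G.Adj]

theorem exists_adj_compl_of_connected (hG : G.Connected) {A : Finset V} (hA : A.Nonempty) {w : V}
    (hw : w ∉ A) : ∃ a ∈ A, ∃ b ∉ A, G.Adj a b := by
  obtain ⟨a, ha⟩ := hA
  obtain ⟨p⟩ := hG.preconnected a w
  obtain ⟨d, -, h1, h2⟩ := p.exists_boundary_dart (A : Set V) (by simpa using ha) (by simpa using hw)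
  exact ⟨d.fst, by simpa using h1, d.snd, by simpa using h2, d.adj⟩

theorem cutConnected_univ [Fintype V] (hG : G.Connected) {D : Finset V} (hD : D.Nonempty) :
    CutConnected G D Finset.univ := by
  intro A hDA hA
  obtain ⟨w, -, hw⟩ := Finset.exists_of_ssubset hA
  obtain ⟨a, ha, b, hb, hab⟩ := exists_adj_compl_of_connected hG (hD.mono hDA) hw
  exact ⟨a, ha, b, by simpa using hb, hab⟩

theorem IsLongestThrough.degSum_add_le {K N : ℕ} [NeZero N] {S : Finset V} {f : ZMod N → V}
    (h : IsLongestThrough G K S f)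
    (hP : ∀ l, IsPathList G l → l.length ≤ 2 * K + 1) {s σ : ℕ} (hs : S.card + s = 2 * K)
    (hσ : 2 ≤ σ) (hsσ : s ≤ σ) :
    ∀ (m : ℕ) (W : Finset V), W.card = m → Finset.univ.image f ⊆ W →
      CutConnected G (Finset.univ.image f) W →
      degSum G W + 2 * σ * N ≤ degSum G (Finset.univ.image f) + 2 * σ * W.card := by
  intro m
  induction m using Nat.strong_induction_on with
  | _ m ih =>
    intro W hWm hDW hW
    by_cases hne : W = Finset.univ.image f
    · rw [hne, h.cyc.card_image]
    · obtain ⟨X, hXW, hX0, hcut, hle⟩ := h.exists_peel hP hs hσ hsσ hDW hne hW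
      have hXW' := hXW.trans Finset.sdiff_subset
      have hc := Finset.card_sdiff_add_card_eq_card hXW'
      have h0 := hX0.card_pos
      have := ih _ (by omega) (W \ X) rfl (fun v hv => Finset.mem_sdiff.2 ⟨hDW hv, fun hvX =>
        (Finset.mem_sdiff.1 (hXW hvX)).2 hv⟩) hcut
      rw [← hc, mul_add]
      omega

/-- The edge bound for connected graphs with neither long paths nor long cycles. -/
theorem degSum_le_of_no_long_cycle [Fintype V] {K : ℕ} (hK : 4 ≤ K)
    (hn : 2 * K + 2 ≤ Fintype.card V) (hG : G.Connected)
    (hP : ∀ l, IsPathList G l → l.length ≤ 2 * K + 1)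
    (hC : ∀ T, HasCycleOn G T → T.card < 2 * K) :
    degSum G Finset.univ ≤ 2 * K * (2 * K - 1) + 2 * (Fintype.card V - 2 * K) ∨
      degSum G Finset.univ ≤ K * (K + 1) + 2 * (K - 1) * (Fintype.card V - K - 1) := by
  obtain ⟨S, hSc, hSW, hSX⟩ := exists_dense_set G (2 * (K - 1)) (K + 1) (by omega)
  obtain ⟨k, rfl⟩ : ∃ k, K = k + 1 := ⟨K - 1, by omega⟩
  simp only [Nat.add_sub_cancel] at *
  rcases Nat.lt_or_ge S.card (k + 3) with hlt | hge
  · right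
    have h1 := hSW Finset.univ (by rw [Finset.card_univ]; omega)
    have hS : S.card = k + 2 := by omega
    have h2 := degSum_le (G := G) S
    rw [hS] at h1 h2
    rw [Finset.card_univ] at h1
    obtain ⟨y, hy⟩ : ∃ y, Fintype.card V = k + 2 + y := ⟨Fintype.card V - (k + 2), by omega⟩
    rw [hy, show k + 2 + y - (k + 1) - 1 = y by omega]
    rw [hy] at h1
    simp only [show k + 2 - 1 = k + 1 by omega] at h2
    nlinarith
  · have hdeg : ∀ v ∈ S, k + 1 ≤ degIn G S v := by
      intro v hv
      have h1 := hSX {v} (by simpa using hv) (by simp) (by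
        rw [Finset.sdiff_singleton_eq_erase, Finset.card_erase_of_mem hv]; omega)
      rw [Finset.sdiff_singleton_eq_erase, degSum_erase hv, Finset.card_singleton] at h1
      omega
    have hcS := hasCycleOn_of_dense (by omega) (by omega) hP hC hdeg hSX
    classical
    obtain ⟨D, hD, hDmax⟩ := Finset.exists_max_image
      ((Finset.univ : Finset (Finset V)).filter fun T => HasCycleOn G T ∧ S ⊆ T) Finset.card
      ⟨S, by simpa using hcS⟩
    simp only [Finset.mem_filter, Finset.mem_univ, true_and] at hD hDmax
    obtain ⟨N, hN⟩ : ∃ N, D.card = N := ⟨_, rfl⟩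
    have hSD := Finset.card_le_card hD.2
    have : NeZero N := ⟨by omega⟩
    obtain ⟨f, hf, rfl⟩ := hD.1.exists_isCyc hN
    have hlt := hC _ hD.1
    have hL : IsLongestThrough G (k + 1) S f :=
      { cyc := hf
        sub := hD.2
        lt := by omega
        deg := fun v hv => (hdeg v hv).trans (degIn_mono hD.2 v)
        longest := fun T hT hST => by rw [← hN]; exact hDmax T ⟨hT, hST⟩ }
    have hW := hSW (Finset.univ.image f) (by omega)
    have hS2 := degSum_le (G := G) S
    have hcut := cutConnected_univ hG (Finset.card_pos.1 (by omega : 0 < (Finset.univ.image f).card))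
    rw [hN] at hlt hSD hW
    obtain ⟨x, hx⟩ : ∃ x, Fintype.card V = N + x := ⟨Fintype.card V - N, by omega⟩
    obtain ⟨j, hj⟩ : ∃ j, S.card = k + 2 + j := ⟨S.card - (k + 2), by omega⟩
    obtain ⟨m, rfl⟩ : ∃ m, k = m + 1 + j := ⟨k - 1 - j, by omega⟩
    obtain ⟨t, ht⟩ : ∃ t, N = m + 1 + j + 2 + j + t := ⟨N - (m + 1 + j + 2 + j), by omega⟩
    obtain ⟨u, rfl⟩ : ∃ u, m = t + u := ⟨m - t, by omega⟩
    rw [hj] at hW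
    rw [hj, show t + u + 1 + j + 2 + j - 1 = t + u + 2 * j + 2 by omega] at hS2
    rcases Nat.eq_zero_or_pos (t + u) with h0 | hm
    · have hfin := hL.degSum_add_le hP (s := 1) (σ := 2) (by omega) le_rfl (by omega) _ _ rfl
        (Finset.subset_univ _) hcut
      obtain ⟨rfl, rfl⟩ : t = 0 ∧ u = 0 := by omega
      rw [Finset.card_univ, hx] at hfin
      rw [hx]
      generalize degSum G Finset.univ = a at *
      generalize degSum G S = b at *
      generalize degSum G (Finset.univ.image f) = c at *
      clear hL hcut hDmax hSW hSX hD hN hf hcS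
      clear f
      subst ht
      rcases Nat.lt_or_ge (2 * j + 2) x with hxj | hxj
      · right
        rw [show 0 + 0 + 1 + j + 2 + j + 0 + x - (0 + 0 + 1 + j + 1) - 1 = j + x by omega]
        nlinarith
      · left
        obtain ⟨w, rfl⟩ : ∃ w, x = w + 1 := ⟨x - 1, by omega⟩
        rw [show 2 * (0 + 0 + 1 + j + 1) - 1 = 2 * j + 3 by omega,
          show 2 * (0 + 0 + 1 + j + 2 + j + 0 + (w + 1) - 2 * (0 + 0 + 1 + j + 1)) = 2 * w by omega]
        nlinarith
    · have hfin := hL.degSum_add_le hP (s := t + u + 1) (σ := t + u + 1) (by omega) (by omega) le_rfl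
        _ _ rfl (Finset.subset_univ _) hcut
      rw [Finset.card_univ, hx] at hfin
      rw [hx]
      generalize degSum G Finset.univ = a at *
      generalize degSum G S = b at *
      generalize degSum G (Finset.univ.image f) = c at *
      clear hL hcut hDmax hSW hSX hD hN hf hcS
      clear f
      subst ht
      rcases Nat.lt_or_ge (j + 2) (2 * x) with hxj | hxj
      · right
        rw [show t + u + 1 + j + 2 + j + t + x - (t + u + 1 + j + 1) - 1 = j + t + x by omega]
        have := Nat.mul_le_mul_left j hxj
        nlinarith
      · left
        rw [show 2 * (t + u + 1 + j + 1) - 1 = 2 * (t + u + j) + 3 by omega]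
        obtain ⟨w, hw⟩ : ∃ w, t + u + 1 + j + 2 + j + t + x = 2 * (t + u + 1 + j + 1) + w :=
          ⟨t + u + 1 + j + 2 + j + t + x - 2 * (t + u + 1 + j + 1), by omega⟩
        rw [hw, Nat.add_sub_cancel_left]
        have hwx : x = w + u + 1 := by omega
        have := Nat.mul_le_mul_left (t + u) hxj
        nlinarith

end NoLongCycle

section CyclicSets

variable {N : ℕ} [NeZero N]

/-- The elements of `A` after which a run of `A` in steps of two ends. -/
def runEnds (A : Finset (ZMod N)) : Finset (ZMod N) := A.filter fun i => i + 2 ∉ A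

/-- The elements of `A` at which a run of `A` in steps of two starts. -/
def runStarts (A : Finset (ZMod N)) : Finset (ZMod N) := A.filter fun i => i - 2 ∉ A

/-- The elements lying neither in `A` nor in its successor set. -/
def gaps (A : Finset (ZMod N)) : Finset (ZMod N) :=
  Finset.univ.filter fun i => i ∉ A ∧ i - 1 ∉ A

variable {A : Finset (ZMod N)}

theorem card_gaps (hA : ∀ i ∈ A, i + 1 ∉ A) : (gaps A).card + 2 * A.card = N := by
  have h1 : gaps A = (A ∪ A.image (· + 1))ᶜ := by
    ext i
    simp only [gaps, Finset.mem_filter, Finset.mem_univ, true_and, Finset.mem_compl,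
      Finset.mem_union, Finset.mem_image, not_or, not_exists, not_and]
    refine and_congr_right fun _ => ⟨fun h j hj hji => h ?_, fun h hi => h _ hi (by ring)⟩
    rwa [← hji, add_sub_cancel_right]
  have hd : Disjoint A (A.image (· + 1)) := by
    rw [Finset.disjoint_right]
    intro i hi
    obtain ⟨j, hj, rfl⟩ := Finset.mem_image.1 hi
    exact hA j hj
  have h2 := Finset.card_union_of_disjoint hd
  rw [Finset.card_image_of_injective _ (add_left_injective 1)] at h2
  have h3 := Finset.card_compl_add_card (A ∪ A.image (· + 1))
  rw [ZMod.card] at h3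
  rw [h1]
  omega

theorem card_runStarts (A : Finset (ZMod N)) : (runStarts A).card = (runEnds A).card := by
  have h1 := Finset.card_filter_add_card_filter_not (s := A) (fun i => i + 2 ∈ A)
  have h2 := Finset.card_filter_add_card_filter_not (s := A) (fun i => i - 2 ∈ A)
  have h3 : (A.filter fun i => i - 2 ∈ A) = (A.filter fun i => i + 2 ∈ A).image (· + 2) := by
    ext i
    simp only [Finset.mem_filter, Finset.mem_image]
    constructor
    · rintro ⟨h, h'⟩
      exact ⟨i - 2, ⟨h', by simpa using h⟩, by ring⟩
    · rintro ⟨j, ⟨h, h'⟩, rfl⟩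
      exact ⟨h', by simpa using h⟩
  rw [h3, Finset.card_image_of_injective _ (add_left_injective 2)] at h2
  unfold runStarts runEnds
  omega

theorem sub_one_mem_gaps (hA : ∀ i ∈ A, i + 1 ∉ A) {i : ZMod N} (hi : i ∈ runStarts A) :
    i - 1 ∈ gaps A := by
  rw [runStarts, Finset.mem_filter] at hi
  rw [gaps, Finset.mem_filter]
  refine ⟨Finset.mem_univ _, fun h => hA _ h (by simpa using hi.1), ?_⟩
  rw [show i - 1 - 1 = i - 2 by ring]
  exact hi.2

theorem card_runStarts_le_card_gaps (hA : ∀ i ∈ A, i + 1 ∉ A) :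
    (runStarts A).card ≤ (gaps A).card :=
  Finset.card_le_card_of_injOn (· - 1) (fun _ hi => sub_one_mem_gaps hA hi)
    fun _ _ _ _ h => sub_left_injective h

theorem card_filter_add_notMem_le (A : Finset (ZMod N)) (q : ℕ) :
    (A.filter fun i => i + ((2 * q : ℕ) : ZMod N) ∉ A).card ≤ q * (runEnds A).card := by
  induction q with
  | zero => simp
  | succ q ih =>
    have hsub : (A.filter fun i => i + ((2 * (q + 1) : ℕ) : ZMod N) ∉ A) ⊆
        (A.filter fun i => i + ((2 * q : ℕ) : ZMod N) ∉ A) ∪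
          (runEnds A).image (· - ((2 * q : ℕ) : ZMod N)) := by
      intro i hi
      rw [Finset.mem_filter] at hi
      rw [Finset.mem_union, Finset.mem_filter, Finset.mem_image]
      by_cases h : i + ((2 * q : ℕ) : ZMod N) ∈ A
      · refine Or.inr ⟨_, Finset.mem_filter.2 ⟨h, ?_⟩, add_sub_cancel_right _ _⟩
        convert hi.2 using 2
        push_cast
        ring
      · exact Or.inl ⟨hi.1, h⟩
    have h1 := Finset.card_le_card hsub
    have h2 := Finset.card_union_le (A.filter fun i => i + ((2 * q : ℕ) : ZMod N) ∉ A)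
      ((runEnds A).image (· - ((2 * q : ℕ) : ZMod N)))
    have h3 := Finset.card_image_le (s := runEnds A) (f := (· - ((2 * q : ℕ) : ZMod N)))
    rw [add_mul, one_mul]
    omega

/-- A set `B` no element of which is next to an element of `A`, and no element of which is followed
by an element of `A` at distance `2 * q`, is small. -/
theorem card_le_of_avoid {B : Finset (ZMod N)} {q : ℕ} (hA : ∀ i ∈ A, i + 1 ∉ A)
    (hAB : ∀ i ∈ A, i + 1 ∉ B) (hBA : ∀ i ∈ B, i + 1 ∉ A)
    (hq : ∀ i ∈ B, i + ((2 * q : ℕ) : ZMod N) ∉ A) :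
    B.card + (runEnds A).card ≤ q * (runEnds A).card + (gaps A).card := by
  have hsub : B ⊆ (A.filter fun i => i + ((2 * q : ℕ) : ZMod N) ∉ A) ∪
      (gaps A \ (runStarts A).image (· - 1)) := by
    intro i hi
    rw [Finset.mem_union, Finset.mem_filter, Finset.mem_sdiff]
    by_cases h : i ∈ A
    · exact Or.inl ⟨h, hq i hi⟩
    · refine Or.inr ⟨Finset.mem_filter.2 ⟨Finset.mem_univ _, h, fun h' => hAB _ h' ?_⟩, fun h' => ?_⟩
      · simpa using hi
      · obtain ⟨j, hj, rfl⟩ := Finset.mem_image.1 h'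
        exact hBA _ hi (by simpa using (Finset.mem_filter.1 hj).1)
  have hs : (runStarts A).image (· - 1) ⊆ gaps A := by
    intro i hi
    obtain ⟨j, hj, rfl⟩ := Finset.mem_image.1 hi
    exact sub_one_mem_gaps hA hj
  have h1 := Finset.card_le_card hsub
  have h2 := Finset.card_union_le (A.filter fun i => i + ((2 * q : ℕ) : ZMod N) ∉ A)
    (gaps A \ (runStarts A).image (· - 1))
  have h3 := Finset.card_sdiff_add_card_eq_card hs
  rw [Finset.card_image_of_injective _ sub_left_injective, card_runStarts] at h3
  have h4 := card_filter_add_notMem_le A q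
  omega

end CyclicSets

section NearlyLongestPath

variable {V : Type*} [DecidableEq V] {G : SimpleGraph V} [DecidableRel G.Adj] {N q : ℕ} [NeZero N]

/-- `f` is a cycle of length `N` in a graph without paths on `N + 2` vertices, and without
disjoint paths on `2 * q + 3` and `N - (2 * q + 1)` vertices. -/
structure IsTopCycle (G : SimpleGraph V) (q : ℕ) (f : ZMod N → V) : Prop where
  cyc : IsCyc G f
  length_le : ∀ l, IsPathList G l → l.length ≤ N + 1
  not_disjoint : ∀ l₁ l₂, IsPathList G l₁ → IsPathList G l₂ → l₁.length = 2 * q + 3 →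
    l₂.length + (2 * q + 1) = N → ¬ List.Disjoint l₁ l₂

variable {f : ZMod N → V}

theorem notMem_arc {z : V} (hz : ∀ i, f i ≠ z) (i : ZMod N) (m : ℕ) : z ∉ arc f i m := by
  intro h
  obtain ⟨j, -, hj⟩ := mem_arc.1 h
  exact hz _ hj

theorem IsTopCycle.not_adj_of_adj (h : IsTopCycle G q f) {i : ZMod N} {z w : V} (hz : ∀ i, f i ≠ z)
    (hw : ∀ i, f i ≠ w) (hiz : G.Adj (f i) z) : ¬ G.Adj z w := by
  intro hzw
  have h1 := (h.cyc.isPathList_arc i le_rfl).cons (notMem_arc hz i N)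
    (head_arc f i (NeZero.pos N)) hiz.symm
  have h2 := h.length_le _ (h1.cons (v := w) (a := z)
    (by simpa [hzw.ne'] using notMem_arc hw i N) (by simp) hzw.symm)
  simp [length_arc] at h2

theorem IsTopCycle.exists_adj (h : IsTopCycle G q f) (hG : G.Connected) [Fintype V] {z : V}
    (hz : ∀ i, f i ≠ z) : ∃ i, G.Adj (f i) z := by
  by_contra! hno
  obtain ⟨a, ha, b, hb, hab⟩ := exists_adj_compl_of_connected hG
    (A := Finset.univ.filter fun v => (∃ i, f i = v) ∨ ∃ i, G.Adj (f i) v) (w := z)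
    ⟨f 0, by simp⟩ (by simp [hz, hno])
  simp only [Finset.mem_filter, Finset.mem_univ, true_and, not_or, not_exists] at ha hb
  by_cases hc : ∃ i, f i = a
  · obtain ⟨i, rfl⟩ := hc
    exact hb.2 i hab
  · obtain ⟨i, hi⟩ := ha.resolve_left hc
    exact h.not_adj_of_adj (not_exists.1 hc) hb.1 hi hab

theorem IsTopCycle.not_adj (h : IsTopCycle G q f) (hG : G.Connected) [Fintype V] {z w : V}
    (hz : ∀ i, f i ≠ z) (hw : ∀ i, f i ≠ w) : ¬ G.Adj z w :=
  (h.exists_adj hG hz).elim fun _ hi => h.not_adj_of_adj hz hw hi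

theorem IsTopCycle.not_hasCycleOn (h : IsTopCycle G q f) (hG : G.Connected) [Fintype V]
    (hn : N + 2 ≤ Fintype.card V) {T : Finset V} (hT : T.card = N + 1) : ¬ HasCycleOn G T := by
  intro hc
  obtain ⟨w, hw⟩ : ∃ w, w ∉ T := by
    by_contra! hall
    rw [Finset.eq_univ_iff_forall.2 hall, Finset.card_univ] at hT
    omega
  obtain ⟨a, ha, b, hb, hab⟩ := exists_adj_compl_of_connected hG
    (Finset.card_pos.1 (by omega : 0 < T.card)) hw
  obtain ⟨l, hl, -, hlen⟩ := hc.exists_path_insert ha hb hab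
  have := h.length_le _ hl
  rw [List.length_cons] at this
  omega

theorem IsTopCycle.card_insert (h : IsTopCycle G q f) {z : V} (hz : ∀ i, f i ≠ z) :
    (Finset.univ.image f ∪ [z].toFinset).card = N + 1 := by
  rw [Finset.card_union_of_disjoint (by simpa using hz), h.cyc.card_image]
  simp

theorem IsTopCycle.succ_notMem (h : IsTopCycle G q f) (hG : G.Connected) [Fintype V]
    (hn : N + 2 ≤ Fintype.card V) {z w : V} (hz : ∀ i, f i ≠ z) (hw : ∀ i, f i ≠ w)
    {i : ZMod N} (hi : i ∈ nbrIdx G f z) : i + 1 ∉ nbrIdx G f w := by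
  intro hi'
  rw [mem_nbrIdx] at hi hi'
  have hp := (h.cyc.isPathList_arc (i + 1) le_rfl).cons (notMem_arc hw (i + 1) N)
    (head_arc f (i + 1) (NeZero.pos N)) hi'
  have hlast : f i ∈ (arc f (i + 1) N).getLast? := getLast_arc f _ _ (NeZero.pos N) (by simp)
  have hlast' : f i ∈ (w :: arc f (i + 1) N).getLast? := by
    rw [List.getLast?_cons, Option.mem_def.1 hlast]; rfl
  by_cases hzw : z = w
  · subst hzw
    refine h.not_hasCycleOn hG hn ?_ (hp.hasCycleOn (by simp) hlast' hi)
    rw [List.toFinset_card_of_nodup hp.2, List.length_cons, length_arc]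
  · have := h.length_le _ (hp.concat (v := z) (by simpa [hzw] using notMem_arc hz (i + 1) N) hlast'
      hi.symm)
    simp [length_arc] at this

theorem IsTopCycle.add_notMem (h : IsTopCycle G q f) (hq : 2 * q + 1 ≤ N) {z w : V}
    (hz : ∀ i, f i ≠ z) (hw : ∀ i, f i ≠ w) (hzw : z ≠ w)
    {i : ZMod N} (hi : i ∈ nbrIdx G f z) : i + ((2 * q : ℕ) : ZMod N) ∉ nbrIdx G f w := by
  intro hi'
  rw [mem_nbrIdx] at hi hi'
  have hp := (h.cyc.isPathList_arc i hq).cons (notMem_arc hz i _) (head_arc f i (by omega)) hi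
  have hlast : f (i + ((2 * q : ℕ) : ZMod N)) ∈ (arc f i (2 * q + 1)).getLast? :=
    getLast_arc f _ _ (by omega) (by push_cast; ring)
  have hp' := hp.concat (v := w) (b := f (i + ((2 * q : ℕ) : ZMod N)))
    (by simpa [hzw.symm] using notMem_arc hw i _)
    (by rw [List.getLast?_cons, Option.mem_def.1 hlast]; rfl) hi'.symm
  have hsplit := arc_add f i (2 * q + 1) (N - (2 * q + 1))
  rw [Nat.add_sub_cancel' hq] at hsplit
  have hall := h.cyc.isPathList_arc i (le_refl N)
  rw [hsplit] at hall
  refine h.not_disjoint _ _ hp' hall.right_of_append (by simp [length_arc])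
    (by rw [length_arc]; omega) ?_
  intro v hv hv'
  simp only [List.cons_append, List.mem_cons, List.mem_append, List.not_mem_nil, or_false] at hv
  rcases hv with rfl | hv | rfl
  · exact notMem_arc hz _ _ hv'
  · exact hall.disjoint_of_append hv hv'
  · exact notMem_arc hw _ _ hv'

end NearlyLongestPath

theorem Finset.sum_le_of_pairwise {ι : Type*} [DecidableEq ι] {S : Finset ι} {g : ι → ℕ} {K : ℕ}
    (hS : 2 ≤ S.card) (h : ∀ i ∈ S, ∀ j ∈ S, i ≠ j → g i + g j ≤ 2 * K) :
    ∑ i ∈ S, g i ≤ S.card * K := by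
  by_cases hall : ∀ i ∈ S, g i ≤ K
  · simpa using Finset.sum_le_card_nsmul S g K hall
  · push Not at hall
    obtain ⟨a, ha, hKa⟩ := hall
    have h1 := Finset.sum_le_card_nsmul (S.erase a) g (2 * K - g a) fun i hi => by
      have := h a ha i (Finset.mem_of_mem_erase hi) (Finset.ne_of_mem_erase hi).symm
      omega
    rw [Finset.card_erase_of_mem ha, smul_eq_mul] at h1
    rw [← Finset.add_sum_erase S g ha]
    obtain ⟨b, hb, hba⟩ := Finset.exists_mem_ne (by omega : 1 < S.card) a
    have h2 := h a ha b hb hba.symm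
    obtain ⟨c, hc⟩ : ∃ c, S.card = c + 2 := ⟨S.card - 2, by omega⟩
    obtain ⟨e, he⟩ : ∃ e, 2 * K = g a + e := ⟨2 * K - g a, by omega⟩
    rw [hc] at h1 ⊢
    rw [he, Nat.add_sub_cancel_left, show c + 2 - 1 = c + 1 by omega] at h1
    have h3 : e ≤ K := by omega
    have := Nat.mul_le_mul_left c h3
    nlinarith

section IndependentSets

variable {V : Type*} [DecidableEq V] {G : SimpleGraph V} [DecidableRel G.Adj]

theorem degIn_eq_zero {W : Finset V} {v : V} (h : ∀ w ∈ W, ¬ G.Adj v w) : degIn G W v = 0 := by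
  rw [degIn, Finset.card_eq_zero, Finset.filter_eq_empty_iff]
  exact h

theorem degSum_eq_zero {W : Finset V} (h : ∀ v ∈ W, ∀ w ∈ W, ¬ G.Adj v w) : degSum G W = 0 :=
  Finset.sum_eq_zero fun v hv => degIn_eq_zero (h v hv)

theorem degSum_eq_of_independent {I W : Finset V} (hIW : I ⊆ W)
    (h : ∀ v ∈ I, ∀ w ∈ I, ¬ G.Adj v w) :
    degSum G W = degSum G (W \ I) + 2 * ∑ v ∈ I, degIn G W v := by
  rw [degSum_eq_sdiff hIW, degSum_eq_zero h, add_zero]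
  congr 2
  refine Finset.sum_congr rfl fun v hv => ?_
  rw [← degIn_sdiff_add hIW v, degIn_eq_zero (h v hv), add_zero]

theorem degIn_add_card_le {I W : Finset V} (hIW : I ⊆ W) {v : V} (h : ∀ w ∈ I, ¬ G.Adj v w) :
    degIn G W v + I.card ≤ W.card := by
  rw [← degIn_sdiff_add hIW v, degIn_eq_zero h, add_zero, ← Finset.card_sdiff_add_card_eq_card hIW]
  exact Nat.add_le_add_right (degIn_le_card _ _) _

theorem degSum_add_le_of_independent {I W : Finset V} (hIW : I ⊆ W)
    (h : ∀ v ∈ I, ∀ w ∈ I, ¬ G.Adj v w) :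
    degSum G W + I.card * (I.card - 1) ≤ W.card * (W.card - 1) := by
  have h1 := degSum_eq_of_independent hIW h
  have h2 := degSum_le (G := G) (W \ I)
  have h3 := Finset.sum_le_card_nsmul I (fun v => degIn G W v) (W.card - I.card) fun v hv =>
    Nat.le_sub_of_add_le (degIn_add_card_le hIW (h v hv))
  have h4 := Finset.card_sdiff_add_card_eq_card hIW
  obtain ⟨r, hr⟩ : ∃ r, W.card = r + I.card := ⟨_, h4.symm⟩
  rw [hr] at h3 ⊢
  have h5 : (W \ I).card = r := by omega
  rw [h5] at h2
  rw [Nat.add_sub_cancel, smul_eq_mul] at h3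
  rcases Nat.eq_zero_or_pos I.card with h0 | h0
  · rw [h0] at h3 ⊢
    simp only [zero_mul, add_zero] at *
    omega
  · obtain ⟨c, hc⟩ : ∃ c, I.card = c + 1 := ⟨I.card - 1, by omega⟩
    rw [hc] at h3 ⊢
    rw [show r + (c + 1) - 1 = r + c by omega, Nat.add_sub_cancel]
    rcases Nat.eq_zero_or_pos r with hr0 | hr0
    · subst hr0
      simp only [zero_mul, zero_add, mul_zero] at *
      nlinarith
    · obtain ⟨s, rfl⟩ : ∃ s, r = s + 1 := ⟨r - 1, by omega⟩
      rw [Nat.add_sub_cancel] at h2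
      nlinarith

end IndependentSets

section TopCycleDegrees

variable {V : Type*} [DecidableEq V] {G : SimpleGraph V} [DecidableRel G.Adj] {N q : ℕ} [NeZero N]
  {f : ZMod N → V}

theorem IsTopCycle.degSum_univ (h : IsTopCycle G q f) (hG : G.Connected) [Fintype V] :
    degSum G Finset.univ = degSum G (Finset.univ.image f) +
      2 * ∑ z ∈ (Finset.univ.image f)ᶜ, degIn G (Finset.univ.image f) z := by
  have h1 := degSum_union (G := G) (disjoint_compl_left (a := Finset.univ.image f))
  rw [degSum_eq_zero (W := (Finset.univ.image f)ᶜ) fun v hv w hw =>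
    h.not_adj hG (by simpa using hv) (by simpa using hw)] at h1
  rw [← zero_add (degSum G (Finset.univ.image f)), ← h1]
  congr 1
  ext v
  rw [Finset.mem_union, Finset.mem_compl]
  exact iff_of_true (Finset.mem_univ v) (em' _)

theorem IsTopCycle.succ_pair (h : IsTopCycle G q f) (hG : G.Connected) [Fintype V]
    (hn : N + 2 ≤ Fintype.card V) {z : V} (hz : ∀ i, f i ≠ z) {i i' : ZMod N} (hii : i ≠ i')
    (hi : i ∈ nbrIdx G f z) (hi' : i' ∈ nbrIdx G f z) :
    ¬ G.Adj (f (i + 1)) (f (i' + 1)) ∧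
      degIn G (Finset.univ.image f) (f (i + 1)) + degIn G (Finset.univ.image f) (f (i' + 1)) ≤ N := by
  rw [mem_nbrIdx] at hi hi'
  by_contra hcon
  rw [not_and_or, not_not, not_le] at hcon
  exact h.not_hasCycleOn hG hn (h.card_insert hz) (h.cyc.hasCycleOn_insert hii (.singleton z)
    (by simpa using hz) (by simp) (by simp) hi.symm hi'.symm hcon)

theorem IsTopCycle.pred_pair (h : IsTopCycle G q f) (hG : G.Connected) [Fintype V]
    (hn : N + 2 ≤ Fintype.card V) {z : V} (hz : ∀ i, f i ≠ z) {i i' : ZMod N}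
    (hi : i ∈ nbrIdx G f z) (hi' : i' ∈ nbrIdx G f z) :
    ¬ G.Adj (f (i - 1)) (f (i' - 1)) := by
  rw [mem_nbrIdx] at hi hi'
  intro hcon
  have hii : i ≠ i' := by rintro rfl; exact hcon.ne rfl
  exact h.not_hasCycleOn hG hn (h.card_insert hz) (h.cyc.hasCycleOn_insert_pred hii (.singleton z)
    (by simpa using hz) (by simp) (by simp) hi.symm hi'.symm (Or.inl hcon))

/-- The vertices following the neighbours of `z` on the cycle are independent, which bounds the number
of edges on the cycle by their degrees. -/
theorem IsTopCycle.degSum_cycle_le (h : IsTopCycle G q f) (hG : G.Connected) [Fintype V]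
    (hn : N + 2 ≤ Fintype.card V) {z : V} (hz : ∀ i, f i ≠ z) {d μ : ℕ}
    (hd : (nbrIdx G f z).card = d) (hμ : (runEnds (nbrIdx G f z)).card = μ) :
    degSum G (Finset.univ.image f) + μ * (μ - 1) ≤ (N - d) * (N - d - 1) +
      2 * ∑ i ∈ nbrIdx G f z, degIn G (Finset.univ.image f) (f (i + 1)) ∧
    ∀ i ∈ nbrIdx G f z, degIn G (Finset.univ.image f) (f (i + 1)) + d ≤ N := by
  have hinj : Function.Injective fun i => f (i + 1) := fun _ _ hab =>
    add_right_cancel (h.cyc.1 hab)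
  have hinj' : Function.Injective fun i => f (i - 1) := fun _ _ hab =>
    sub_left_injective (h.cyc.1 hab)
  have hIW : (nbrIdx G f z).image (fun i => f (i + 1)) ⊆ Finset.univ.image f := by
    intro v hv
    obtain ⟨i, -, rfl⟩ := Finset.mem_image.1 hv
    simp
  have hI : ∀ v ∈ (nbrIdx G f z).image (fun i => f (i + 1)),
      ∀ w ∈ (nbrIdx G f z).image (fun i => f (i + 1)), ¬ G.Adj v w := by
    intro v hv w hw hvw
    obtain ⟨i, hi, rfl⟩ := Finset.mem_image.1 hv
    obtain ⟨j, hj, rfl⟩ := Finset.mem_image.1 hw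
    have hij : i ≠ j := by rintro rfl; exact hvw.ne rfl
    exact (h.succ_pair hG hn hz hij hi hj).1 hvw
  have hIc := Finset.card_image_of_injective (nbrIdx G f z) hinj
  have hJc := Finset.card_image_of_injective (runStarts (nbrIdx G f z)) hinj'
  rw [card_runStarts, hμ] at hJc
  rw [hd] at hIc
  have hWI := Finset.card_sdiff_add_card_eq_card hIW
  rw [h.cyc.card_image] at hWI
  constructor
  · have hJW : (runStarts (nbrIdx G f z)).image (fun i => f (i - 1)) ⊆
        Finset.univ.image f \ (nbrIdx G f z).image (fun i => f (i + 1)) := by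
      intro v hv
      obtain ⟨i, hi, rfl⟩ := Finset.mem_image.1 hv
      rw [Finset.mem_sdiff]
      refine ⟨by simp, fun hmem => ?_⟩
      obtain ⟨j, hj, hji⟩ := Finset.mem_image.1 hmem
      have := h.cyc.1 hji
      refine (Finset.mem_filter.1 hi).2 ?_
      rwa [show i - 2 = j by linear_combination -this]
    have h1 := degSum_add_le_of_independent hJW (G := G) (by
      intro v hv w hw
      obtain ⟨i, hi, rfl⟩ := Finset.mem_image.1 hv
      obtain ⟨j, hj, rfl⟩ := Finset.mem_image.1 hw
      exact h.pred_pair hG hn hz (Finset.mem_filter.1 hi).1 (Finset.mem_filter.1 hj).1)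
    have h2 := degSum_eq_of_independent hIW hI
    rw [Finset.sum_image fun _ _ _ _ hab => hinj hab] at h2
    rw [hJc, show (Finset.univ.image f \ (nbrIdx G f z).image (fun i => f (i + 1))).card = N - d
      by omega] at h1
    omega
  · intro i hi
    have := degIn_add_card_le hIW (hI (f (i + 1)) (Finset.mem_image_of_mem _ hi))
    rwa [h.cyc.card_image, hIc] at this

theorem IsTopCycle.degIn_le_of_swap (h : IsTopCycle G q f) (hN : 1 < N) {z : V}
    (hz : ∀ i, f i ≠ z) {d : ℕ}
    (hmax : ∀ T w, HasCycleOn G T → T.card = N → w ∉ T → degIn G T w ≤ d) {i : ZMod N}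
    (hi : i ∈ nbrIdx G f z) (hi' : i + 2 ∈ nbrIdx G f z) :
    degIn G (Finset.univ.image f) (f (i + 1)) ≤ d := by
  rw [mem_nbrIdx] at hi hi'
  have hc := h.cyc.hasCycleOn_replace hN (.singleton z) (by simpa using hz) (x := z) (y := z)
    (by simp) (by simp) (o := i + 1) (by simpa using hi.symm)
    (by rwa [show i + 1 + 1 = i + 2 by ring])
  have hcard : ((Finset.univ.image f).erase (f (i + 1)) ∪ [z].toFinset).card = N := by
    rw [Finset.card_union_of_disjoint (by simp [hz]),
      Finset.card_erase_of_mem (by simp), h.cyc.card_image]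
    simp
    omega
  refine le_trans (Finset.card_le_card fun v hv => ?_) (hmax _ (f (i + 1)) hc hcard (by simp [hz]))
  rw [Finset.mem_filter] at hv ⊢
  exact ⟨Finset.mem_union_left _ (Finset.mem_erase.2 ⟨hv.2.ne', hv.1⟩), hv.2⟩

theorem IsTopCycle.degIn_add_le (h : IsTopCycle G q f) (hG : G.Connected) [Fintype V]
    (hn : N + 2 ≤ Fintype.card V) (hq : 2 * q + 1 ≤ N) {z w : V} (hz : ∀ i, f i ≠ z)
    (hw : ∀ i, f i ≠ w) (hzw : z ≠ w) :
    degIn G (Finset.univ.image f) w + (runEnds (nbrIdx G f z)).card + 2 * (nbrIdx G f z).card ≤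
      q * (runEnds (nbrIdx G f z)).card + N := by
  have hA : ∀ i ∈ nbrIdx G f z, i + 1 ∉ nbrIdx G f z := fun i hi => h.succ_notMem hG hn hz hz hi
  have h1 := card_le_of_avoid (q := q) hA (fun i hi => h.succ_notMem hG hn hz hw hi)
    (fun i hi => h.succ_notMem hG hn hw hz hi) (fun i hi => h.add_notMem hq hw hz hzw.symm hi)
  rw [card_nbrIdx h.cyc.1] at h1
  have h2 := card_gaps hA
  omega

end TopCycleDegrees

section Arithmetic

variable {a b c d e K x μ s : ℕ}

/-- In the three bounds below `d` is the largest degree of an off-cycle vertex to a cycle of length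
`2 * K`, `x` is the number of off-cycle vertices, `c` and `s` count the edges on and leaving the cycle,
and `a` is the resulting degree sum. -/
theorem bound_of_two_le (hK : K = d + 1 + e) (hd : 2 ≤ d) (he : 2 ≤ e)
    (hc : c ≤ (2 * K - d) * (2 * K - d - 1) + 2 * (d * K)) (ha : a = c + 2 * s) (hs : s ≤ x * d) :
    a ≤ 2 * K * (2 * K - 1) + 2 * x ∨ a ≤ K * (K + 1) + 2 * (K - 1) * (K - 1 + x) := by
  subst hK
  rw [show 2 * (d + 1 + e) - d = d + 2 * e + 2 by omega,
    show d + 2 * e + 2 - 1 = d + 2 * e + 1 by omega] at hc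
  rw [show 2 * (d + 1 + e) - 1 = 2 * d + 2 * e + 1 by omega, show d + 1 + e - 1 = d + e by omega]
  rcases Nat.lt_or_ge (d + 1 + 2 * e) (2 * x) with hx | hx
  · right
    have := Nat.mul_le_mul_left e hx
    nlinarith
  · left
    have := Nat.mul_le_mul_left (d - 1) hx
    obtain ⟨t, rfl⟩ : ∃ t, d = t + 1 := ⟨d - 1, by omega⟩
    rw [Nat.add_sub_cancel] at this
    nlinarith

theorem bound_of_eq_one (hK : K = d + 2) (hK4 : 4 ≤ K) (hx : 2 ≤ x) (hμ : μ ≤ 4)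
    (hμd : μ ≤ d)
    (hc : c + μ * (μ - 1) ≤ (2 * K - d) * (2 * K - d - 1) + 2 * ((d - μ) * d + b))
    (hb0 : μ = 0 → b = 0) (hb1 : μ = 1 → b + d ≤ 2 * K) (hb2 : 2 ≤ μ → b ≤ μ * K)
    (ha : a = c + 2 * s) (hs : s ≤ x * d) :
    a ≤ 2 * K * (2 * K - 1) + 2 * x ∨ a ≤ K * (K + 1) + 2 * (K - 1) * (K - 1 + x) := by
  subst hK
  have hc' : c ≤ (d + 4) * (d + 3) + 2 * (d * d + 4) := by
    rw [show 2 * (d + 2) - d = d + 4 by omega, show d + 4 - 1 = d + 3 by omega] at hc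
    obtain ⟨t, rfl⟩ : ∃ t, d = t + μ := ⟨d - μ, by omega⟩
    rw [Nat.add_sub_cancel] at hc
    interval_cases μ
    · rw [hb0 rfl] at hc; nlinarith
    · have := hb1 rfl; nlinarith
    · have := hb2 (by omega); nlinarith
    · have := hb2 (by omega); nlinarith
    · have := hb2 (by omega); nlinarith
  rw [show 2 * (d + 2) - 1 = 2 * d + 3 by omega, show d + 2 - 1 = d + 1 by omega]
  rcases Nat.lt_or_ge (d + x) 6 with h6 | h6
  · left
    have : x < 4 := by omega
    have : d < 4 := by omega
    interval_cases x <;> interval_cases d <;> omega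
  · right
    nlinarith

theorem bound_of_eq_zero (hK : K = d + 1) (hK4 : 4 ≤ K) (hx : 2 ≤ x) (hμ : μ ≤ 2)
    (hc : c + μ * (μ - 1) ≤ (2 * K - d) * (2 * K - d - 1) + 2 * ((d - μ) * d + b))
    (hb0 : μ = 0 → b = 0) (hb1 : μ = 1 → b + d ≤ 2 * K) (hb2 : 2 ≤ μ → b ≤ μ * K)
    (ha : a = c + 2 * s) (hs : s ≤ x * d) (hs' : 1 ≤ μ → s ≤ d + (x - 1) * (d - 1)) :
    a ≤ 2 * K * (2 * K - 1) + 2 * x ∨ a ≤ K * (K + 1) + 2 * (K - 1) * (K - 1 + x) := by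
  subst hK
  rw [show 2 * (d + 1) - d = d + 2 by omega, show d + 2 - 1 = d + 1 by omega] at hc
  rw [show 2 * (d + 1) - 1 = 2 * d + 1 by omega, Nat.add_sub_cancel]
  rcases Nat.eq_zero_or_pos μ with h0 | h0
  · subst h0
    rw [hb0 rfl, Nat.sub_zero] at hc
    right
    nlinarith
  · have hs'' := hs' h0
    obtain ⟨t, rfl⟩ : ∃ t, d = t + 2 := ⟨d - 2, by omega⟩
    obtain ⟨y, rfl⟩ : ∃ y, x = y + 2 := ⟨x - 2, by omega⟩
    rw [show y + 2 - 1 = y + 1 by omega, show t + 2 - 1 = t + 1 by omega] at hs''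
    have hc' : c ≤ (t + 4) * (t + 3) + 2 * ((t + 2) * (t + 2)) + 4 ∧
        (2 ≤ μ → c + 2 ≤ (t + 4) * (t + 3) + 2 * ((t + 2) * (t + 2)) + 4) := by
      interval_cases μ
      · have := hb1 rfl
        rw [show t + 2 - 1 = t + 1 by omega] at hc
        exact ⟨by nlinarith, by omega⟩
      · have := hb2 (by omega)
        rw [show t + 2 - 2 = t by omega] at hc
        refine ⟨?_, fun _ => ?_⟩ <;> nlinarith
    rcases Nat.eq_zero_or_pos y with rfl | hy
    · left
      nlinarith [hc'.1]
    · right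
      nlinarith [hc'.1]

end Arithmetic

section TopCycleBound

variable {V : Type*} [DecidableEq V] {G : SimpleGraph V} [DecidableRel G.Adj] {K q : ℕ}
  [NeZero (2 * K)] {f : ZMod (2 * K) → V}

theorem IsTopCycle.sum_succ_le (h : IsTopCycle G q f) (hG : G.Connected) [Fintype V]
    (hn : 2 * K + 2 ≤ Fintype.card V) {z : V} (hz : ∀ i, f i ≠ z)
    {S : Finset (ZMod (2 * K))} (hS : S ⊆ nbrIdx G f z) (hS2 : 2 ≤ S.card) :
    ∑ i ∈ S, degIn G (Finset.univ.image f) (f (i + 1)) ≤ S.card * K :=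
  Finset.sum_le_of_pairwise hS2 fun _ hi _ hj hij =>
    (h.succ_pair hG hn hz hij (hS hi) (hS hj)).2

/-- The bound for the edges on a cycle of length `2 * K` relative to an off-cycle vertex of maximum
degree to such a cycle. -/
theorem IsTopCycle.degSum_cycle_le_of_max (h : IsTopCycle G q f) (hG : G.Connected) [Fintype V]
    (hn : 2 * K + 2 ≤ Fintype.card V) (hK : 1 ≤ K) {z : V} (hz : ∀ i, f i ≠ z) {d μ : ℕ}
    (hd : (nbrIdx G f z).card = d) (hμ : (runEnds (nbrIdx G f z)).card = μ)
    (hmax : ∀ T w, HasCycleOn G T → T.card = 2 * K → w ∉ T → degIn G T w ≤ d) :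
    ∃ b, degSum G (Finset.univ.image f) + μ * (μ - 1) ≤ (2 * K - d) * (2 * K - d - 1) +
      2 * ((d - μ) * d + b) ∧ (μ = 0 → b = 0) ∧ (μ = 1 → b + d ≤ 2 * K) ∧ (2 ≤ μ → b ≤ μ * K) := by
  obtain ⟨h1, h2⟩ := h.degSum_cycle_le hG hn hz hd hμ
  refine ⟨∑ i ∈ runEnds (nbrIdx G f z), degIn G (Finset.univ.image f) (f (i + 1)), ?_, ?_, ?_, ?_⟩
  · have hs := Finset.sum_filter_add_sum_filter_not (nbrIdx G f z)
      (fun i => i + 2 ∈ nbrIdx G f z) fun i => degIn G (Finset.univ.image f) (f (i + 1))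
    have hc := Finset.card_filter_add_card_filter_not (s := nbrIdx G f z)
      (fun i => i + 2 ∈ nbrIdx G f z)
    have hle := Finset.sum_le_card_nsmul ((nbrIdx G f z).filter fun i => i + 2 ∈ nbrIdx G f z)
      (fun i => degIn G (Finset.univ.image f) (f (i + 1))) d fun i hi =>
        h.degIn_le_of_swap (by omega) hz hmax (Finset.mem_filter.1 hi).1 (Finset.mem_filter.1 hi).2
    unfold runEnds at hμ ⊢
    rw [smul_eq_mul, show ((nbrIdx G f z).filter fun i => i + 2 ∈ nbrIdx G f z).card = d - μ
      by omega] at hle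
    omega
  · intro h0
    rw [h0, Finset.card_eq_zero] at hμ
    rw [hμ, Finset.sum_empty]
  · intro h1
    rw [h1, Finset.card_eq_one] at hμ
    obtain ⟨i, hi⟩ := hμ
    rw [hi, Finset.sum_singleton]
    exact h2 i (Finset.mem_filter.1 (hi ▸ Finset.mem_singleton_self i)).1
  · intro h2
    rw [← hμ] at h2 ⊢
    exact h.sum_succ_le hG hn hz (Finset.filter_subset _ _) h2

/-- The edge bound for connected graphs with a cycle of length `2 * K` and no longer one. -/
theorem IsTopCycle.degSum_univ_le (h : IsTopCycle G q f) (hG : G.Connected) [Fintype V]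
    (hn : 2 * K + 2 ≤ Fintype.card V) (hK : 4 ≤ K) (hq : 1 ≤ q) (hqK : 2 * q + 2 ≤ K) {z : V}
    (hz : ∀ i, f i ≠ z)
    (hmax : ∀ T w, HasCycleOn G T → T.card = 2 * K → w ∉ T →
      degIn G T w ≤ degIn G (Finset.univ.image f) z) :
    degSum G Finset.univ ≤ 2 * K * (2 * K - 1) + 2 * (Fintype.card V - 2 * K) ∨
      degSum G Finset.univ ≤ K * (K + 1) + 2 * (K - 1) * (Fintype.card V - K - 1) := by
  have hcyc := h.cyc.hasCycleOn
  have hcard := h.cyc.card_image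
  obtain ⟨d, hd⟩ : ∃ d, (nbrIdx G f z).card = d := ⟨_, rfl⟩
  obtain ⟨μ, hμ⟩ : ∃ μ, (runEnds (nbrIdx G f z)).card = μ := ⟨_, rfl⟩
  rw [← card_nbrIdx h.cyc.1, hd] at hmax
  obtain ⟨x, hx⟩ : ∃ x, Fintype.card V = 2 * K + x := ⟨Fintype.card V - 2 * K, by omega⟩
  have hRc : ((Finset.univ.image f)ᶜ).card = x := by rw [Finset.card_compl, hcard]; omega
  have hzR : z ∈ (Finset.univ.image f)ᶜ := by simpa using hz
  have hA : ∀ i ∈ nbrIdx G f z, i + 1 ∉ nbrIdx G f z := fun i hi => h.succ_notMem hG hn hz hz hi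
  have hgap := card_gaps hA
  have hμgap := card_runStarts_le_card_gaps hA
  rw [card_runStarts, hμ] at hμgap
  rw [hd] at hgap
  have hle : ∀ w ∈ (Finset.univ.image f)ᶜ, degIn G (Finset.univ.image f) w ≤ d := fun w hw =>
    hmax _ w hcyc hcard (by simpa using hw)
  have hoth : ∀ w ∈ (Finset.univ.image f)ᶜ.erase z,
      degIn G (Finset.univ.image f) w + μ + 2 * d ≤ q * μ + 2 * K := by
    intro w hw
    rw [Finset.mem_erase, Finset.mem_compl] at hw
    have := h.degIn_add_le hG hn (by omega) hz (w := w) (by simpa using hw.2) hw.1.symm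
    rwa [hd, hμ] at this
  have hdK : d ≤ K - 1 := by
    by_contra hlt
    have hdK : d = K := by omega
    obtain ⟨w, hw, hwz⟩ := Finset.exists_mem_ne (by omega : 1 < (Finset.univ.image f)ᶜ.card) z
    have h1 := hoth w (Finset.mem_erase.2 ⟨hwz, hw⟩)
    obtain ⟨i, hi⟩ := h.exists_adj hG (z := w) (by simpa using hw)
    have h2 : 0 < (nbrIdx G f w).card := Finset.card_pos.2 ⟨i, mem_nbrIdx.2 hi.symm⟩
    rw [card_nbrIdx h.cyc.1] at h2
    obtain rfl : μ = 0 := by omega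
    omega
  have hsum : ∑ w ∈ (Finset.univ.image f)ᶜ, degIn G (Finset.univ.image f) w ≤ x * d := by
    rw [← hRc]
    simpa using Finset.sum_le_card_nsmul _ _ d hle
  have htot := h.degSum_univ hG
  obtain ⟨b, hb, hb0, hb1, hb2⟩ := h.degSum_cycle_le_of_max hG hn (by omega) hz hd hμ hmax
  obtain ⟨e, he⟩ : ∃ e, K = d + 1 + e := ⟨K - 1 - d, by omega⟩
  rw [hx, show 2 * K + x - 2 * K = x by omega, show 2 * K + x - K - 1 = K - 1 + x by omega]
  rcases Nat.lt_or_ge d 2 with hd2 | hd2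
  · left
    have h1 := degSum_le (G := G) (Finset.univ.image f)
    rw [hcard] at h1
    have h2 := Nat.mul_le_mul_left x (by omega : d ≤ 1)
    omega
  rcases Nat.lt_or_ge e 2 with he2 | he2
  · have hμd : μ ≤ d := by
      rw [← hμ, ← hd]
      exact Finset.card_le_card (Finset.filter_subset _ _)
    rcases Nat.eq_zero_or_pos e with rfl | he0
    · refine bound_of_eq_zero he hK (by omega) (by omega) hb hb0 hb1 hb2 htot hsum fun hμ1 => ?_
      rw [← Finset.add_sum_erase _ _ hzR]
      have h1 := Finset.sum_le_card_nsmul ((Finset.univ.image f)ᶜ.erase z)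
        (fun w => degIn G (Finset.univ.image f) w) (d - 1) fun w hw => by
          have h1 := hoth w hw
          have : μ = 1 ∨ μ = 2 := by omega
          rcases this with rfl | rfl <;> omega
      rw [Finset.card_erase_of_mem hzR, hRc, smul_eq_mul] at h1
      exact Nat.add_le_add (hle z hzR) h1
    · exact bound_of_eq_one (by omega) hK (by omega) (by omega) hμd hb hb0 hb1 hb2 htot hsum
  · have h1 := (h.degSum_cycle_le hG hn hz hd hμ).1
    have h2 := h.sum_succ_le hG hn hz subset_rfl (by omega)
    rw [hd] at h2
    exact bound_of_two_le he hd2 he2 (by omega) htot hsum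

end TopCycleBound

theorem degSum_le_of_hasCycleOn {V : Type*} [Fintype V] [DecidableEq V] {G : SimpleGraph V}
    [DecidableRel G.Adj] {K q : ℕ} (hG : G.Connected) (hn : 2 * K + 2 ≤ Fintype.card V)
    (hK : 4 ≤ K) (hq : 1 ≤ q) (hqK : 2 * q + 2 ≤ K)
    (hP : ∀ l, IsPathList G l → l.length ≤ 2 * K + 1)
    (hF : ∀ l₁ l₂, IsPathList G l₁ → IsPathList G l₂ → l₁.length = 2 * q + 3 →
      l₂.length + (2 * q + 1) = 2 * K → ¬ List.Disjoint l₁ l₂)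
    {T : Finset V} (hT : HasCycleOn G T) (hTK : T.card = 2 * K) :
    degSum G Finset.univ ≤ 2 * K * (2 * K - 1) + 2 * (Fintype.card V - 2 * K) ∨
      degSum G Finset.univ ≤ K * (K + 1) + 2 * (K - 1) * (Fintype.card V - K - 1) := by
  classical
  obtain ⟨w, hw⟩ : ∃ w, w ∉ T := by
    by_contra! hall
    rw [Finset.eq_univ_iff_forall.2 hall, Finset.card_univ] at hTK
    omega
  obtain ⟨⟨D, z⟩, hD, hmax⟩ := Finset.exists_max_image
    ((Finset.univ : Finset (Finset V × V)).filter fun p =>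
      HasCycleOn G p.1 ∧ p.1.card = 2 * K ∧ p.2 ∉ p.1) (fun p => degIn G p.1 p.2)
    ⟨(T, w), by simpa using ⟨hT, hTK, hw⟩⟩
  simp only [Finset.mem_filter, Finset.mem_univ, true_and, Prod.forall] at hD hmax
  have : NeZero (2 * K) := ⟨by omega⟩
  obtain ⟨f, hf, rfl⟩ := hD.1.exists_isCyc hD.2.1
  exact IsTopCycle.degSum_univ_le (q := q) ⟨hf, hP, hF⟩ hG hn hK hq hqK (by simpa using hD.2.2)
    fun T w h1 h2 h3 => hmax T w ⟨h1, h2, h3⟩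

/-- If `k1 ≥ k2 ≥ 2` and `G` is a connected graph on
`n ≥ 2k1 + 2k2 + 2` vertices containing no copy of `P_{2k1+1} ∪ P_{2k2+1}`, then
`e(G) ≤ max{h(n, 2k1+2k2+1, 1), h(n, 2k1+2k2, k1+k2-1)}`. -/
theorem connected_two_odd_paths_bound (k1 k2 n : ℕ) (hk2 : 2 ≤ k2) (hk12 : k2 ≤ k1)
    (hn : 2 * k1 + 2 * k2 + 2 ≤ n) (G : SimpleGraph (Fin n)) (hG : G.Connected)
    (hfree : ¬ ContainsCopy G ((pathGraph (2 * k1 + 1)) ⊕g (pathGraph (2 * k2 + 1)))) :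
    edgeCount G ≤
      max (hFun n (2 * k1 + 2 * k2 + 1) 1) (hFun n (2 * k1 + 2 * k2) (k1 + k2 - 1)) := by
  classical
  obtain ⟨q, rfl⟩ : ∃ q, k2 = q + 1 := ⟨k2 - 1, by omega⟩
  obtain ⟨K, hK⟩ : ∃ K, K = k1 + (q + 1) := ⟨_, rfl⟩
  have hcard : Fintype.card (Fin n) = n := Fintype.card_fin n
  have hP : ∀ l, IsPathList G l → l.length ≤ 2 * K + 1 := fun l hl => by
    by_contra hlt
    exact hfree (containsCopy_of_long_path hl (by omega))
  have hF : ∀ l₁ l₂, IsPathList G l₁ → IsPathList G l₂ → l₁.length = 2 * q + 3 →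
      l₂.length + (2 * q + 1) = 2 * K → ¬ List.Disjoint l₁ l₂ := fun l₁ l₂ h₁ h₂ hl₁ hl₂ hd =>
    hfree (containsCopy_of_isPathList h₂ h₁ hd.symm (by omega) (by omega))
  have hmain : degSum G Finset.univ ≤ 2 * K * (2 * K - 1) + 2 * (n - 2 * K) ∨
      degSum G Finset.univ ≤ K * (K + 1) + 2 * (K - 1) * (n - K - 1) := by
    by_cases hT : ∃ T, HasCycleOn G T ∧ T.card = 2 * K
    · obtain ⟨T, hT, hTK⟩ := hT
      simpa only [hcard] using degSum_le_of_hasCycleOn hG (by omega) (by omega) (q := q) (by omega)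
        (by omega) hP hF hT hTK
    · have hC : ∀ T, HasCycleOn G T → T.card < 2 * K := by
        intro T hTc
        by_contra hge
        have hne : T.card ≠ 2 * K := fun h => hT ⟨T, hTc, h⟩
        by_cases hall : ∃ w, w ∉ T
        · obtain ⟨w, hw⟩ := hall
          obtain ⟨a, ha, b, hb, hab⟩ := exists_adj_compl_of_connected hG
            (Finset.card_pos.1 (by omega : 0 < T.card)) hw
          obtain ⟨l, hl, -, hlen⟩ := hTc.exists_path_insert ha hb hab
          have := hP _ hl
          rw [List.length_cons] at this
          omega
        · push Not at hall
          obtain ⟨l, hl, -, -, hlT⟩ := hTc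
          have h1 := List.toFinset_card_of_nodup hl.2
          rw [hlT, Finset.eq_univ_iff_forall.2 hall, Finset.card_univ] at h1
          have := hP _ hl
          omega
      simpa only [hcard] using degSum_le_of_no_long_cycle (by omega) (by omega) hG hP hC
  rw [← two_mul_edgeCount] at hmain
  rw [show 2 * k1 + 2 * (q + 1) = 2 * K by omega, ← hK, le_max_iff]
  refine hmain.imp (fun h => ?_) fun h => ?_
  · unfold hFun
    rw [Nat.add_sub_cancel, Nat.choose_two_right]
    have h2 := Nat.div_mul_cancel (Nat.even_mul_pred_self (2 * K)).two_dvd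
    omega
  · unfold hFun
    rw [show 2 * K - (K - 1) = K + 1 by omega, show n - 2 * K + (K - 1) = n - K - 1 by omega,
      Nat.choose_two_right, Nat.add_sub_cancel]
    have h2 := Nat.div_mul_cancel (Nat.even_mul_succ_self K).two_dvd
    rw [mul_comm (K + 1) K]
    rw [mul_assoc] at h
    omega
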